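/- arXiv:1201.6462 — 2 statements merged into one kernel-verified Lean document; each statement's English description precedes it below -/
import Mathlib

section
/- There is a universal constant c₂ > 0 such that the following holds. Let ε ∈ (0,1), n ≥ 2, and let q be an integer with q ≥ c₂ k² (log n)/ε⁴. Then with probability at least 1 − n^{−3} over the random samples, simultaneously for all k-clusterings C' of V and all i₁, i₂, j ∈ [k] with i₁ < i₂: |F_{i₁,i₂,j}(C') − F̂_{i₁,i₂,j}(C')| ≤ ε · max{ |C_{i₁ j} × C_{i₂ j}|, |C_{i₁ j} × (C_{i₁} \ C_{i₁ j})| / k, |C_{i₂ j} × (C_{i₂} \ C_{i₂ j})| / k }. -/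
open Finset

attribute [local instance] Classical.propDecidable

/-- A `k`-clustering of `V` is encoded by its cluster-assignment function `Cl : V → Fin k`;
two points are in the same cluster iff they have the same assigned index.
`cluster Cl i` is the `i`-th cluster `C_i`, as a finset. -/
noncomputable def cluster {V : Type*} [Fintype V] {k : ℕ} (Cl : V → Fin k) (i : Fin k) : Finset V :=
  Finset.univ.filter fun v => Cl v = i

/-- `cost_{u,v}(C) = 1[(u,v) ∈ E]·1[u ≢_C v] + 1[(u,v) ∉ E]·1[u ≡_C v]`. -/
noncomputable def costuv {V : Type*} {k : ℕ} (G : SimpleGraph V) (Cl : V → Fin k) (u v : V) : ℝ :=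
  (if G.Adj u v then (if Cl u = Cl v then 0 else 1) else (if Cl u = Cl v then 1 else 0))

/-- `cost(C)`: the number of unordered pairs of distinct points on which the clustering
`Cl` disagrees with the graph `G` (each unordered pair counted once, via half the sum
over ordered pairs). -/
noncomputable def cost {V : Type*} [Fintype V] {k : ℕ} (G : SimpleGraph V) (Cl : V → Fin k) : ℝ :=
  (1 / 2) * ∑ u : V, ∑ v : V, if u ≠ v then costuv G Cl u v else 0

/-- The disagreement distance between two `k`-clusterings:
`d(C,C') = (1/2) Σ_{u ≠ v} (1[u ≡_{C'} v]·1[u ≢_C v] + 1[u ≡_C v]·1[u ≢_{C'} v])`. -/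
noncomputable def dd {V : Type*} [Fintype V] {k : ℕ} (Cl Cl' : V → Fin k) : ℝ :=
  (1 / 2) * ∑ u : V, ∑ v : V, if u ≠ v then
      ((if Cl' u = Cl' v ∧ ¬Cl u = Cl v then (1 : ℝ) else 0) +
        (if Cl u = Cl v ∧ ¬Cl' u = Cl' v then (1 : ℝ) else 0))
    else 0

/-- `f_{u,v}(C') = cost_{u,v}(C') - cost_{u,v}(C)`. -/
noncomputable def fuv {V : Type*} {k : ℕ} (G : SimpleGraph V) (Cl Cl' : V → Fin k) (u v : V) : ℝ :=
  costuv G Cl' u v - costuv G Cl u v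

/-- The sample space: `q` points of `C_i` for every vertex `u` and every cluster index `i`. -/
abbrev Samples {V : Type*} {k : ℕ} (Cl : V → Fin k) (q : ℕ) : Type _ :=
  ∀ _u : V, ∀ i : Fin k, Fin q → {v : V // Cl v = i}

/-- The sum of `g u v` over `u ∈ A` and the sampled points `v ∈ B` from the cluster `i`. -/
noncomputable def sampleSum {V : Type*} {k q : ℕ} {Cl : V → Fin k} (g : V → V → ℝ) (i : Fin k)
    (A B : Finset V) (ω : Samples Cl q) : ℝ :=
  ∑ u ∈ A, ∑ s : Fin q, if (ω u i s).1 ∈ B then g u (ω u i s).1 else 0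

/-- The value of `f_{u,v}(C')` on pairs separated by `C` and joined by `C'`. -/
noncomputable def joinCost {V : Type*} (G : SimpleGraph V) (u v : V) : ℝ :=
  if G.Adj u v then -1 else 1

/-- The distance of `A ⊆ S` to the nearer of the trivial subsets `∅` and `S`. -/
def minSide {V : Type*} (S A : Finset V) : ℕ := min #A (#S - #A)

theorem abs_joinCost_le {V : Type*} (G : SimpleGraph V) (u v : V) : |joinCost G u v| ≤ 1 := by
  unfold joinCost; split_ifs <;> norm_num

theorem fuv_eq_joinCost {V : Type*} {k : ℕ} (G : SimpleGraph V) {Cl Cl' : V → Fin k} {u v : V}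
    (h : Cl u ≠ Cl v) (h' : Cl' u = Cl' v) : fuv G Cl Cl' u v = joinCost G u v := by
  unfold fuv costuv joinCost; split_ifs <;> simp_all

theorem sum_prod_samples {V : Type*} [Fintype V] {k q : ℕ} (Cl : V → Fin k)
    (φ : V → Fin k → V → ℝ) :
    ∑ ω : Samples Cl q, ∏ u, ∏ i, ∏ s, φ u i (ω u i s).1 =
      ∏ u, ∏ i : Fin k, ∏ _s : Fin q, ∑ x : {v : V // Cl v = i}, φ u i x.1 := by
  simp_rw [Finset.prod_univ_sum, Fintype.piFinset_univ]

theorem card_samples {V : Type*} [Fintype V] {k q : ℕ} (Cl : V → Fin k) :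
    (Fintype.card (Samples Cl q) : ℝ) =
      ∏ _u : V, ∏ i : Fin k, ∏ _s : Fin q, ((cluster Cl i).card : ℝ) := by
  simp [Fintype.card_pi, cluster, Fintype.card_subtype]

/-- The moment generating function of a sum over independent samples. -/
theorem sum_exp_samples_le {V : Type*} [Fintype V] {k q : ℕ} (Cl : V → Fin k) (i : Fin k)
    (A : Finset V) (h : V → V → ℝ) (c : V → ℝ)
    (hc : ∀ u ∈ A, ∑ v ∈ cluster Cl i, Real.exp (h u v) ≤ (cluster Cl i).card * Real.exp (c u)) :
    ∑ ω : Samples Cl q, Real.exp (∑ u ∈ A, ∑ s, h u (ω u i s).1) ≤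
      Fintype.card (Samples Cl q) * Real.exp (q * ∑ u ∈ A, c u) := by
  let φ : V → Fin k → V → ℝ := fun u i' v =>
    if u ∈ A then if i' = i then Real.exp (h u v) else 1 else 1
  let ψ : V → Fin k → ℝ := fun u i' => if u ∈ A then if i' = i then Real.exp (c u) else 1 else 1
  have h1 (ω : Samples Cl q) : Real.exp (∑ u ∈ A, ∑ s, h u (ω u i s).1) =
      ∏ u, ∏ i', ∏ s, φ u i' (ω u i' s).1 := by
    rw [Real.exp_sum, ← Finset.prod_subset (Finset.subset_univ A)]
    · refine Finset.prod_congr rfl fun u hu => ?_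
      rw [Real.exp_sum, Finset.prod_eq_single_of_mem i (Finset.mem_univ i)]
      · simp [φ, hu]
      · intro j _ hj
        simp [φ, hj]
    · intro u _ hu
      simp [φ, hu]
  have h2 : Real.exp (q * ∑ u ∈ A, c u) = ∏ u, ∏ i', ∏ _s : Fin q, ψ u i' := by
    rw [Finset.mul_sum, Real.exp_sum, ← Finset.prod_subset (Finset.subset_univ A)]
    · refine Finset.prod_congr rfl fun u hu => ?_
      rw [Finset.prod_eq_single_of_mem i (Finset.mem_univ i)]
      · simp [ψ, hu, Real.exp_nat_mul]
      · intro j _ hj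
        simp [ψ, hj]
    · intro u _ hu
      simp [ψ, hu]
  simp_rw [h1]
  rw [sum_prod_samples, card_samples, h2]
  simp_rw [← Finset.prod_mul_distrib]
  have hφ (u i' v) : 0 ≤ φ u i' v := by
    simp only [φ]; split_ifs <;> positivity
  have hs (u : V) (i' : Fin k) : 0 ≤ ∑ x : {v : V // Cl v = i'}, φ u i' x.1 :=
    Finset.sum_nonneg fun x _ => hφ _ _ _
  refine Finset.prod_le_prod (fun u _ => Finset.prod_nonneg fun j _ =>
    Finset.prod_nonneg fun _ _ => hs u j) fun u _ => ?_
  refine Finset.prod_le_prod (fun j _ => Finset.prod_nonneg fun _ _ => hs u j) fun j _ => ?_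
  refine Finset.prod_le_prod (fun _ _ => hs u j) fun _ _ => ?_
  have h3 : ∑ x : {v : V // Cl v = j}, φ u j x.1 = ∑ v ∈ cluster Cl j, φ u j v :=
    (Finset.sum_subtype _ (by simp [cluster]) _).symm
  rw [h3]
  by_cases hu : u ∈ A
  · by_cases hj : j = i
    · subst hj
      simpa [φ, ψ, hu] using hc u hu
    · simp [φ, ψ, hj]
  · simp [φ, ψ, hu]

theorem card_filter_le_of_sum_exp_le {Ω : Type*} [Fintype Ω] (X : Ω → ℝ) {c : ℝ} (t : ℝ)
    (h : ∑ ω, Real.exp (X ω) ≤ Fintype.card Ω * Real.exp c) :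
    (#{ω | t ≤ X ω} : ℝ) ≤ Fintype.card Ω * Real.exp (c - t) := by
  have h1 : (#{ω | t ≤ X ω} : ℝ) * Real.exp t ≤ ∑ ω, Real.exp (X ω) := by
    calc (#{ω | t ≤ X ω} : ℝ) * Real.exp t = ∑ ω with t ≤ X ω, Real.exp t := by simp
      _ ≤ ∑ ω with t ≤ X ω, Real.exp (X ω) :=
        Finset.sum_le_sum fun ω hω => Real.exp_le_exp.2 (Finset.mem_filter.1 hω).2
      _ ≤ ∑ ω, Real.exp (X ω) :=
        Finset.sum_le_sum_of_subset_of_nonneg (Finset.filter_subset _ _)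
          fun _ _ _ => (Real.exp_pos _).le
  rw [Real.exp_sub, ← mul_div_assoc, le_div_iff₀ (Real.exp_pos t)]
  exact h1.trans h

theorem sum_exp_ite_le {V : Type*} {D B : Finset V} (hB : B ⊆ D) (hD : 0 < #D) {g : V → ℝ}
    (hg : ∀ v, |g v| ≤ 1) {l : ℝ} (hl : |l| ≤ 1) :
    ∑ v ∈ D, Real.exp (l * if v ∈ B then g v else 0) ≤
      #D * Real.exp (l * (∑ v ∈ B, g v) / #D + l ^ 2 * #B / #D) := by
  have hD' : (0 : ℝ) < #D := by exact_mod_cast hD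
  have h1 (v : V) : Real.exp (l * if v ∈ B then g v else 0) ≤
      1 + ((if v ∈ B then l * g v else 0) + (if v ∈ B then l ^ 2 else 0)) := by
    split_ifs with hv
    · have h2 : |l * g v| ≤ 1 := by
        rw [abs_mul]; exact mul_le_one₀ hl (abs_nonneg _) (hg v)
      have h3 := (abs_le.1 (Real.abs_exp_sub_one_sub_id_le h2)).2
      have h4 : g v ^ 2 ≤ 1 := (sq_le_one_iff_abs_le_one _).2 (hg v)
      nlinarith [mul_le_mul_of_nonneg_left h4 (sq_nonneg l)]
    · simp
  calc _ ≤ ∑ v ∈ D, (1 + ((if v ∈ B then l * g v else 0) + (if v ∈ B then l ^ 2 else 0))) :=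
        Finset.sum_le_sum fun v _ => h1 v
    _ = #D * ((l * (∑ v ∈ B, g v) / #D + l ^ 2 * #B / #D) + 1) := by
        rw [Finset.sum_add_distrib, Finset.sum_add_distrib, Finset.sum_ite_mem, Finset.sum_ite_mem,
          Finset.inter_eq_right.2 hB, ← Finset.mul_sum]
        simp
        field_simp
        ring
    _ ≤ _ := by gcongr; exact Real.add_one_le_exp _

theorem card_le_mul_sampleSum_le {V : Type*} [Fintype V] {k q : ℕ} (Cl : V → Fin k) (i : Fin k)
    (A : Finset V) {B : Finset V} (hB : B ⊆ cluster Cl i) (hi : 0 < #(cluster Cl i))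
    {g : V → V → ℝ} (hg : ∀ u v, |g u v| ≤ 1) {l : ℝ} (hl : |l| ≤ 1) (t : ℝ) :
    (#{ω : Samples Cl q | t ≤ l * sampleSum g i A B ω} : ℝ) ≤ Fintype.card (Samples Cl q) *
      Real.exp (l * (q / #(cluster Cl i) * ∑ u ∈ A, ∑ v ∈ B, g u v)
        + l ^ 2 * (q * (#A * #B / #(cluster Cl i))) - t) := by
  refine card_filter_le_of_sum_exp_le _ t ?_
  have h := sum_exp_samples_le (q := q) Cl i A (fun u v => l * if v ∈ B then g u v else 0)
    _ (fun u _ => sum_exp_ite_le hB hi (hg u) hl)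
  convert h using 1
  · simp only [sampleSum, Finset.mul_sum]
  · congr 2
    rw [Finset.sum_add_distrib, ← Finset.sum_div, ← Finset.mul_sum]
    simp
    ring

/-- Bernstein-type bound for the deviation of `sampleSum` from its expectation. -/
theorem card_deviation_le {V : Type*} [Fintype V] {k q : ℕ} (Cl : V → Fin k) (i : Fin k)
    (A : Finset V) {B : Finset V} (hB : B ⊆ cluster Cl i) (hi : 0 < #(cluster Cl i))
    {g : V → V → ℝ} (hg : ∀ u v, |g u v| ≤ 1) {ε T : ℝ} (hε : 0 < ε) (hε1 : ε < 1)
    (hT : (#A : ℝ) * #B / #(cluster Cl i) ≤ T) :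
    (#{ω : Samples Cl q | ε * (q * T) ≤
        |q / #(cluster Cl i) * (∑ u ∈ A, ∑ v ∈ B, g u v) - sampleSum g i A B ω|} : ℝ) ≤
      Fintype.card (Samples Cl q) * (2 * Real.exp (-(ε ^ 2 * q * T / 4))) := by
  set μ : ℝ := q / #(cluster Cl i) * ∑ u ∈ A, ∑ v ∈ B, g u v with hμ
  have hqT : (q : ℝ) * ((#A : ℝ) * #B / #(cluster Cl i)) ≤ q * T := by gcongr
  have key (l : ℝ) (hl : |l| ≤ 1) (hl2 : l ^ 2 = ε ^ 2 / 4) :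
      (#{ω : Samples Cl q | l * μ + ε ^ 2 * q * T / 2 ≤ l * sampleSum g i A B ω} : ℝ) ≤
      Fintype.card (Samples Cl q) * Real.exp (-(ε ^ 2 * q * T / 4)) := by
    refine (card_le_mul_sampleSum_le Cl i A hB hi hg hl _).trans ?_
    gcongr
    rw [← hμ, hl2]
    nlinarith [mul_le_mul_of_nonneg_left hqT (sq_nonneg ε)]
  have h1 := key (ε / 2) (by rw [abs_of_pos] <;> linarith) (by ring)
  have h2 := key (-(ε / 2)) (by rw [abs_neg, abs_of_pos] <;> linarith) (by ring)
  have hsub : ({ω : Samples Cl q | ε * (q * T) ≤ |μ - sampleSum g i A B ω|} : Finset _) ⊆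
      ({ω | ε / 2 * μ + ε ^ 2 * q * T / 2 ≤ ε / 2 * sampleSum g i A B ω} : Finset _) ∪
      ({ω | -(ε / 2) * μ + ε ^ 2 * q * T / 2 ≤ -(ε / 2) * sampleSum g i A B ω} : Finset _) := by
    intro ω hω
    simp only [Finset.mem_filter, Finset.mem_univ, true_and, Finset.mem_union] at hω ⊢
    rcases le_abs.1 hω with h | h
    · right
      nlinarith [mul_le_mul_of_nonneg_left h hε.le]
    · left
      nlinarith [mul_le_mul_of_nonneg_left h hε.le]
  have h3 := (Nat.cast_le (α := ℝ)).2 ((Finset.card_le_card hsub).trans (Finset.card_union_le _ _))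
  push_cast at h3
  linarith

theorem sum_powerset_inv_pow_minSide_le {V : Type*} (S : Finset V) {n : ℕ} (hn : 0 < n)
    (hS : #S ≤ n) : ∑ A ∈ S.powerset, ((n : ℝ)⁻¹) ^ minSide S A ≤ 6 := by
  have hx : (0 : ℝ) ≤ (n : ℝ)⁻¹ := by positivity
  have h1 : ∑ A ∈ S.powerset, ((n : ℝ)⁻¹) ^ minSide S A ≤
      ∑ A ∈ S.powerset, (((n : ℝ)⁻¹) ^ #A * 1 ^ (#S - #A) + 1 ^ #A * ((n : ℝ)⁻¹) ^ (#S - #A)) := by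
    refine Finset.sum_le_sum fun A _ => ?_
    simp only [one_pow, mul_one, one_mul, minSide]
    rcases min_choice #A (#S - #A) with h | h <;> rw [h]
    · have := pow_nonneg hx (#S - #A); linarith
    · have := pow_nonneg hx #A; linarith
  have h2 : ((n : ℝ)⁻¹ + 1) ^ #S ≤ 3 := by
    calc ((n : ℝ)⁻¹ + 1) ^ #S ≤ Real.exp (n : ℝ)⁻¹ ^ n := by
          refine (pow_le_pow_left₀ (by positivity) (Real.add_one_le_exp _) _).trans ?_
          exact pow_le_pow_right₀ (Real.one_le_exp hx) hS
      _ = Real.exp 1 := by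
          rw [← Real.exp_nat_mul, mul_inv_cancel₀ (by positivity)]
      _ ≤ 3 := by linarith [Real.exp_one_lt_d9]
  rw [Finset.sum_add_distrib, Finset.sum_pow_mul_eq_add_pow, Finset.sum_pow_mul_eq_add_pow,
    add_comm (1 : ℝ)] at h1
  linarith

theorem exp_neg_mul_log_le {n N : ℕ} (hn : 0 < n) {x : ℝ} (h : N * Real.log n ≤ x) :
    Real.exp (-x) ≤ ((n : ℝ)⁻¹) ^ N := by
  have hn' : (0 : ℝ) < n := by exact_mod_cast hn
  calc Real.exp (-x) ≤ Real.exp (N * -Real.log n) := Real.exp_le_exp.2 (by linarith)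
    _ = _ := by rw [Real.exp_nat_mul, Real.exp_neg, Real.exp_log hn']

/-- The maximum bounding the allowed error for `A ⊆ S` and `B ⊆ D`. -/
noncomputable def slack {V : Type*} (k : ℕ) (S D A B : Finset V) : ℝ :=
  max ((#A : ℝ) * #B) (max ((#A : ℝ) * #(S \ A) / k) ((#B : ℝ) * #(D \ B) / k))

theorem card_mul_minSide_le {V : Type*} {S A : Finset V} (hA : A ⊆ S) :
    (minSide S A : ℝ) * #S ≤ 2 * (#A * #(S \ A)) := by
  have h1 : #(S \ A) = #S - #A := Finset.card_sdiff_of_subset hA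
  have h2 : #A + #(S \ A) = #S := by have := Finset.card_le_card hA; omega
  have h3 : minSide S A ≤ #A := min_le_left _ _
  have h4 : minSide S A ≤ #(S \ A) := h1 ▸ min_le_right _ _
  rw [← h2]
  norm_cast
  nlinarith [Nat.mul_le_mul_left #A h4, Nat.mul_le_mul_right #(S \ A) h3]

theorem minSide_mul_log_le {V : Type*} {S D A B : Finset V} {k q : ℕ} {ε L : ℝ} (hk : 0 < k)
    (hε : 0 < ε) (hε1 : ε < 1) (hL : 0 ≤ L) (hq : 2000 * (k : ℝ) ^ 2 * L / ε ^ 4 ≤ q)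
    (hA : A ⊆ S) (hB : B ⊆ D) (hA0 : A.Nonempty) (hB0 : B.Nonempty)
    (h : #D < 2 * #B ∨ ε * #D ≤ 16 * k * #S) :
    (12 + minSide S A + minSide D B : ℕ) * L ≤ ε ^ 2 * q * (slack k S D A B / #D) / 4 := by
  set T := slack k S D A B / #D with hT
  have hk1 : (1 : ℝ) ≤ k := by exact_mod_cast hk
  have hD : (0 : ℝ) < #D := by exact_mod_cast (hB0.mono hB).card_pos
  have hA1 : (1 : ℝ) ≤ #A := by exact_mod_cast hA0.card_pos
  have hB1 : (1 : ℝ) ≤ #B := by exact_mod_cast hB0.card_pos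
  have hTD : slack k S D A B = T * #D := by rw [hT]; field_simp
  have hM1 : (#A : ℝ) * #B ≤ T * #D := hTD ▸ le_max_left _ _
  have hM2 : (#A : ℝ) * #(S \ A) ≤ T * #D * k := by
    rw [← div_le_iff₀ (by linarith), ← hTD]
    exact (le_max_left _ _).trans (le_max_right _ _)
  have hM3 : (#B : ℝ) * #(D \ B) ≤ T * #D * k := by
    rw [← div_le_iff₀ (by linarith), ← hTD]
    exact (le_max_right _ _).trans (le_max_right _ _)
  have hT0 : 0 ≤ T := by
    by_contra! h0
    nlinarith
  have hkT : k * T ≤ k ^ 2 * T := by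
    refine mul_le_mul_of_nonneg_right ?_ hT0
    nlinarith
  have hb : (minSide D B : ℝ) ≤ 2 * (k * T) := by
    refine le_of_mul_le_mul_right ?_ hD
    linarith [card_mul_minSide_le hB]
  have h1 : 1 ≤ 2 * (k * T) := by
    rcases (Finset.card_le_card hB).eq_or_lt with hBD | hBD
    · rw [hBD] at hM1
      have : (#A : ℝ) ≤ T := le_of_mul_le_mul_right hM1 hD
      nlinarith
    · refine le_trans ?_ hb
      have : 1 ≤ minSide D B := le_min hB0.card_pos (by omega)
      exact_mod_cast this
  have ha : ε * (minSide S A : ℝ) ≤ 32 * (k ^ 2 * T) := by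
    rcases h with h | h
    · have h' : (#D : ℝ) < 2 * #B := by exact_mod_cast h
      have h2 : (#A : ℝ) ≤ 2 * T := by
        refine le_of_mul_le_mul_right ?_ hD
        nlinarith
      have h3 : (minSide S A : ℝ) ≤ #A := by exact_mod_cast min_le_left _ _
      nlinarith
    · refine le_of_mul_le_mul_right ?_ hD
      have h2 := mul_le_mul_of_nonneg_left h (Nat.cast_nonneg (α := ℝ) (minSide S A))
      have h3 := mul_le_mul_of_nonneg_left (card_mul_minSide_le hA) (by linarith : (0 : ℝ) ≤ k)
      have h4 := mul_le_mul_of_nonneg_left hM2 (by linarith : (0 : ℝ) ≤ k)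
      linarith
  have hN : ε * (12 + minSide S A + minSide D B : ℕ) ≤ 58 * (k ^ 2 * T) := by
    push_cast
    have : ε * (minSide D B : ℝ) ≤ minSide D B :=
      mul_le_of_le_one_left (Nat.cast_nonneg _) hε1.le
    linarith
  have hN' : ε ^ 2 * (12 + minSide S A + minSide D B : ℕ) ≤ 58 * (k ^ 2 * T) := by
    refine le_trans ?_ hN
    have : ε ^ 2 ≤ ε := by nlinarith
    exact mul_le_mul_of_nonneg_right this (Nat.cast_nonneg _)
  rw [div_le_iff₀ (by positivity)] at hq
  refine le_of_mul_le_mul_left ?_ (by positivity : 0 < ε ^ 2)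
  have h5 := mul_le_mul_of_nonneg_right hN' hL
  have h6 := mul_le_mul_of_nonneg_right hq hT0
  have h7 : 0 ≤ k ^ 2 * T * L := by positivity
  linarith

/-- Control of the number of samples hitting `B` when the first cluster is much smaller. -/
theorem card_hits_le {V : Type*} [Fintype V] {k q n : ℕ} (Cl : V → Fin k) (i : Fin k)
    {S B : Finset V} {ε : ℝ} (hn : 0 < n) (hk : 0 < k) (hε : 0 < ε) (hε1 : ε < 1)
    (hq : 2000 * (k : ℝ) ^ 2 * Real.log n / ε ^ 4 ≤ q)
    (hB : B ⊆ cluster Cl i) (hB0 : B.Nonempty) (h : 16 * k * #S ≤ ε * #(cluster Cl i)) :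
    (#{ω : Samples Cl q | ε * q * #B / (4 * k) ≤ 1 * sampleSum (fun _ _ => 1) i S B ω} : ℝ) ≤
      Fintype.card (Samples Cl q) * ((n : ℝ)⁻¹) ^ (12 + minSide (cluster Cl i) B) := by
  have hD0 := (hB0.mono hB).card_pos
  have hD : (0 : ℝ) < #(cluster Cl i) := by exact_mod_cast hD0
  have hk1 : (1 : ℝ) ≤ k := by exact_mod_cast hk
  have hB1 : (1 : ℝ) ≤ #B := by exact_mod_cast hB0.card_pos
  refine (card_le_mul_sampleSum_le Cl i S hB hD0 (g := fun _ _ => 1) (by simp) (l := 1)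
    (by simp) _).trans ?_
  refine mul_le_mul_of_nonneg_left ?_ (Nat.cast_nonneg _)
  have hS : (#S : ℝ) / #(cluster Cl i) ≤ ε / (16 * k) := by
    rw [div_le_div_iff₀ hD (by positivity)]; linarith
  have h1 := mul_le_mul_of_nonneg_left hS (by positivity : (0 : ℝ) ≤ q * #B)
  refine le_trans (b := Real.exp (-(ε * q * #B / (8 * k)))) (Real.exp_le_exp.2 ?_)
    (exp_neg_mul_log_le hn ?_)
  · simp only [Finset.sum_const, nsmul_eq_mul, mul_one]
    have e1 : (q : ℝ) / #(cluster Cl i) * (#S * #B) = q * #B * (#S / #(cluster Cl i)) := by ring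
    have e2 : (q : ℝ) * (#S * #B / #(cluster Cl i)) = q * #B * (#S / #(cluster Cl i)) := by ring
    have e3 : (q : ℝ) * #B * (ε / (16 * k)) = ε * q * #B / (8 * k) / 2 := by field_simp; ring
    have e4 : ε * q * #B / (4 * k) = 2 * (ε * q * #B / (8 * k)) := by field_simp; ring
    rw [e1, e2, e4]
    linarith
  · have hL : 0 ≤ Real.log n := Real.log_natCast_nonneg n
    have hm : (minSide (cluster Cl i) B : ℝ) ≤ #B := by exact_mod_cast min_le_left _ _
    rw [div_le_iff₀ (by positivity)] at hq
    have h4 : (q : ℝ) * ε ^ 4 ≤ ε * q := by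
      have : ε ^ 4 ≤ ε := by simpa using pow_le_pow_of_le_one hε.le hε1.le (show 1 ≤ 4 by norm_num)
      nlinarith [Nat.cast_nonneg (α := ℝ) q]
    rw [le_div_iff₀ (by positivity)]
    push_cast
    have h5 : (12 + (minSide (cluster Cl i) B : ℝ)) ≤ 13 * #B := by linarith
    have h6 := mul_le_mul_of_nonneg_right h5 (by positivity : 0 ≤ Real.log n * (8 * k))
    have h7 := mul_le_mul_of_nonneg_right (hq.trans h4) (Nat.cast_nonneg (α := ℝ) #B)
    have h8 : (k : ℝ) * (Real.log n * #B) ≤ k ^ 2 * (Real.log n * #B) := by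
      refine mul_le_mul_of_nonneg_right ?_ (by positivity)
      nlinarith
    have h9 : 0 ≤ (k : ℝ) ^ 2 * (Real.log n * #B) := by positivity
    linarith

theorem deviation_lt_of_hits_lt {V : Type*} [Fintype V] {k q : ℕ} {Cl : V → Fin k} {i : Fin k}
    {S A B : Finset V} {ε : ℝ} (hk : 0 < k) (hε : 0 < ε)
    (hA : A ⊆ S) (hB : B ⊆ cluster Cl i) (hB0 : B.Nonempty)
    (h : 16 * k * #S ≤ ε * #(cluster Cl i)) (h2 : 2 * #B ≤ #(cluster Cl i))
    {g : V → V → ℝ} (hg : ∀ u v, |g u v| ≤ 1) {ω : Samples Cl q}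
    (hω : sampleSum (fun _ _ => 1) i S B ω < ε * q * #B / (4 * k)) :
    |q / #(cluster Cl i) * (∑ u ∈ A, ∑ v ∈ B, g u v) - sampleSum g i A B ω| <
      ε * (q * (slack k S (cluster Cl i) A B / #(cluster Cl i))) := by
  have hD : (0 : ℝ) < #(cluster Cl i) := by exact_mod_cast (hB0.mono hB).card_pos
  have hk1 : (1 : ℝ) ≤ k := by exact_mod_cast hk
  have hY : |sampleSum g i A B ω| ≤ sampleSum (fun _ _ => 1) i S B ω := by
    unfold sampleSum
    calc _ ≤ ∑ u ∈ A, ∑ s : Fin q, if (ω u i s).1 ∈ B then (1 : ℝ) else 0 := by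
          refine (Finset.abs_sum_le_sum_abs _ _).trans (Finset.sum_le_sum fun u _ => ?_)
          refine (Finset.abs_sum_le_sum_abs _ _).trans (Finset.sum_le_sum fun s _ => ?_)
          split_ifs
          · exact hg _ _
          · simp
      _ ≤ _ := Finset.sum_le_sum_of_subset_of_nonneg hA fun u _ _ =>
          Finset.sum_nonneg fun s _ => by split_ifs <;> norm_num
  have hF : |∑ u ∈ A, ∑ v ∈ B, g u v| ≤ #S * #B := by
    calc _ ≤ ∑ u ∈ A, ∑ v ∈ B, (1 : ℝ) :=
          (Finset.abs_sum_le_sum_abs _ _).trans (Finset.sum_le_sum fun u _ =>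
            (Finset.abs_sum_le_sum_abs _ _).trans (Finset.sum_le_sum fun v _ => hg u v))
      _ = #A * #B := by simp
      _ ≤ _ := by gcongr
  have hE : |q / #(cluster Cl i) * ∑ u ∈ A, ∑ v ∈ B, g u v| ≤ ε * q * #B / (16 * k) := by
    rw [abs_mul, abs_of_nonneg (by positivity)]
    refine (mul_le_mul_of_nonneg_left hF (by positivity)).trans ?_
    rw [div_mul_eq_mul_div, div_le_div_iff₀ hD (by positivity)]
    have := mul_le_mul_of_nonneg_left h (by positivity : (0 : ℝ) ≤ q * #B)
    linarith
  have hT : (#B : ℝ) / (2 * k) ≤ slack k S (cluster Cl i) A B / #(cluster Cl i) := by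
    have h3 : (#B : ℝ) * #(cluster Cl i \ B) / k ≤ slack k S (cluster Cl i) A B :=
      (le_max_right _ _).trans (le_max_right _ _)
    refine le_trans ?_ (div_le_div_of_nonneg_right h3 hD.le)
    have h4 : (#(cluster Cl i) : ℝ) ≤ 2 * #(cluster Cl i \ B) := by
      have := Finset.card_sdiff_of_subset hB
      norm_cast
      omega
    rw [div_div, div_le_div_iff₀ (by positivity) (by positivity)]
    have := mul_le_mul_of_nonneg_left h4 (by positivity : (0 : ℝ) ≤ #B * k)
    linarith
  have hT' := mul_le_mul_of_nonneg_left hT (by positivity : (0 : ℝ) ≤ ε * q)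
  have e1 : ε * q * #B / (4 * k) = 4 * (ε * q * #B / (16 * k)) := by field_simp; norm_num
  have e2 : ε * q * (#B / (2 * k)) = 8 * (ε * q * #B / (16 * k)) := by field_simp; ring
  have h0 : 0 ≤ ε * q * #B / (16 * k) := by positivity
  have := abs_sub (q / #(cluster Cl i) * ∑ u ∈ A, ∑ v ∈ B, g u v) (sampleSum g i A B ω)
  linarith

/-- The failure probability for a fixed pair of clusters. -/
theorem card_bad_pair_le {V : Type*} [Fintype V] {k q : ℕ} (Cl : V → Fin k) (i : Fin k)
    (S : Finset V) {ε : ℝ} (hn : 0 < Fintype.card V) (hk : 0 < k) (hq0 : 0 < q)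
    (hε : 0 < ε) (hε1 : ε < 1)
    (hq : 2000 * (k : ℝ) ^ 2 * Real.log (Fintype.card V) / ε ^ 4 ≤ q)
    {g : V → V → ℝ} (hg : ∀ u v, |g u v| ≤ 1) :
    (#{ω : Samples Cl q | ∃ A ⊆ S, ∃ B ⊆ cluster Cl i, ε * slack k S (cluster Cl i) A B <
        |(∑ u ∈ A, ∑ v ∈ B, g u v) - #(cluster Cl i) / q * sampleSum g i A B ω|} : ℝ) ≤
      Fintype.card (Samples Cl q) * (78 * ((Fintype.card V : ℝ)⁻¹) ^ 12) := by
  set n := Fintype.card V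
  set D := cluster Cl i
  set N : ℝ := (Fintype.card (Samples Cl q) : ℝ)
  have hL : 0 ≤ Real.log n := Real.log_natCast_nonneg n
  have hq0' : (0 : ℝ) < q := by exact_mod_cast hq0
  let P := {p ∈ S.powerset ×ˢ D.powerset | p.1.Nonempty ∧ p.2.Nonempty ∧
    (#D < 2 * #p.2 ∨ ε * #D ≤ 16 * k * #S)}
  let Q := {B ∈ D.powerset | B.Nonempty ∧ 16 * k * #S ≤ ε * #D}
  let E₁ (p : Finset V × Finset V) : Finset (Samples Cl q) :=
    {ω | ε * (q * (slack k S D p.1 p.2 / #D)) ≤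
      |q / #D * (∑ u ∈ p.1, ∑ v ∈ p.2, g u v) - sampleSum g i p.1 p.2 ω|}
  let E₂ (B : Finset V) : Finset (Samples Cl q) :=
    {ω | ε * q * #B / (4 * k) ≤ 1 * sampleSum (fun _ _ => 1) i S B ω}
  let x : ℝ := (n : ℝ)⁻¹
  have hx : 0 ≤ x := by positivity
  have hsub : ({ω : Samples Cl q | ∃ A ⊆ S, ∃ B ⊆ D, ε * slack k S D A B <
      |(∑ u ∈ A, ∑ v ∈ B, g u v) - #D / q * sampleSum g i A B ω|} : Finset _) ⊆
      P.biUnion E₁ ∪ Q.biUnion E₂ := by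
    intro ω hω
    obtain ⟨A, hA, B, hB, hAB⟩ := (Finset.mem_filter.1 hω).2
    have hs : 0 ≤ slack k S D A B := le_trans (by positivity) (le_max_left _ _)
    have hA0 : A.Nonempty := by
      by_contra h0
      rw [Finset.not_nonempty_iff_eq_empty] at h0
      subst h0
      simp only [sampleSum, Finset.sum_empty, mul_zero, sub_zero, abs_zero] at hAB
      exact absurd hAB (not_lt.2 (by positivity))
    have hB0 : B.Nonempty := by
      by_contra h0
      rw [Finset.not_nonempty_iff_eq_empty] at h0
      subst h0
      simp only [sampleSum, Finset.sum_empty, Finset.sum_const_zero, Finset.notMem_empty,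
        if_false, mul_zero, sub_zero, abs_zero] at hAB
      exact absurd hAB (not_lt.2 (by positivity))
    have hD : (0 : ℝ) < #D := by exact_mod_cast (hB0.mono hB).card_pos
    have hdev : ε * (q * (slack k S D A B / #D)) ≤
        |q / #D * (∑ u ∈ A, ∑ v ∈ B, g u v) - sampleSum g i A B ω| := by
      have e : q / #D * (∑ u ∈ A, ∑ v ∈ B, g u v) - sampleSum g i A B ω =
          q / #D * ((∑ u ∈ A, ∑ v ∈ B, g u v) - #D / q * sampleSum g i A B ω) := by
        field_simp
      rw [e, abs_mul, abs_of_pos (by positivity : (0 : ℝ) < q / #D)]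
      calc _ = q / #D * (ε * slack k S D A B) := by ring
        _ ≤ _ := by gcongr
    rw [Finset.mem_union, Finset.mem_biUnion, Finset.mem_biUnion]
    by_cases h : #D < 2 * #B ∨ ε * #D ≤ 16 * k * #S
    · refine Or.inl ⟨(A, B), ?_, ?_⟩
      · simp [P, hA, hB, hA0, hB0, h]
      · simpa [E₁] using hdev
    · push Not at h
      refine Or.inr ⟨B, ?_, ?_⟩
      · simp [Q, hB, hB0, h.2.le]
      · by_contra hω2
        have hω3 : sampleSum (fun _ _ => 1) i S B ω < ε * q * #B / (4 * k) := by
          simpa [E₂] using hω2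
        exact absurd hdev (not_le.2 (deviation_lt_of_hits_lt hk hε hA hB hB0 h.2.le h.1 hg hω3))
  have hE₁ : ∀ p ∈ P, (#(E₁ p) : ℝ) ≤
      N * (2 * x ^ 12) * (x ^ minSide S p.1 * x ^ minSide D p.2) := by
    rintro ⟨A, B⟩ hp
    simp only [P, Finset.mem_filter, Finset.mem_product, Finset.mem_powerset] at hp
    obtain ⟨⟨hA, hB⟩, hA0, hB0, h⟩ := hp
    have hD0 := (hB0.mono hB).card_pos
    refine (card_deviation_le Cl i A hB hD0 hg hε hε1
      (div_le_div_of_nonneg_right (le_max_left _ _) (Nat.cast_nonneg _))).trans ?_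
    have := exp_neg_mul_log_le hn (minSide_mul_log_le hk hε hε1 hL hq hA hB hA0 hB0 h)
    calc _ ≤ N * (2 * x ^ (12 + minSide S A + minSide D B)) := by gcongr; exact this
      _ = _ := by rw [pow_add, pow_add]; ring
  have hE₂ : ∀ B ∈ Q, (#(E₂ B) : ℝ) ≤ N * x ^ 12 * x ^ minSide D B := by
    intro B hB
    simp only [Q, Finset.mem_filter, Finset.mem_powerset] at hB
    refine (card_hits_le Cl i hn hk hε hε1 hq hB.1 hB.2.1 hB.2.2).trans ?_
    rw [pow_add, mul_assoc]
  have hS6 := sum_powerset_inv_pow_minSide_le S hn (Finset.card_le_univ S)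
  have hD6 := sum_powerset_inv_pow_minSide_le D hn (Finset.card_le_univ D)
  have hS0 : 0 ≤ ∑ A ∈ S.powerset, x ^ minSide S A := Finset.sum_nonneg fun _ _ => by positivity
  have hD0 : 0 ≤ ∑ B ∈ D.powerset, x ^ minSide D B := Finset.sum_nonneg fun _ _ => by positivity
  have hP : (#(P.biUnion E₁) : ℝ) ≤ N * (2 * x ^ 12) * 36 := by
    calc (#(P.biUnion E₁) : ℝ) ≤ ∑ p ∈ P, (#(E₁ p) : ℝ) := by exact_mod_cast Finset.card_biUnion_le
      _ ≤ ∑ p ∈ P, N * (2 * x ^ 12) * (x ^ minSide S p.1 * x ^ minSide D p.2) :=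
        Finset.sum_le_sum hE₁
      _ ≤ ∑ p ∈ S.powerset ×ˢ D.powerset,
          N * (2 * x ^ 12) * (x ^ minSide S p.1 * x ^ minSide D p.2) :=
        Finset.sum_le_sum_of_subset_of_nonneg (Finset.filter_subset _ _)
          fun _ _ _ => by positivity
      _ = N * (2 * x ^ 12) *
          ((∑ A ∈ S.powerset, x ^ minSide S A) * ∑ B ∈ D.powerset, x ^ minSide D B) := by
        rw [← Finset.mul_sum, Finset.sum_mul_sum, Finset.sum_product]
      _ ≤ _ := by
        gcongr
        nlinarith
  have hQ : (#(Q.biUnion E₂) : ℝ) ≤ N * x ^ 12 * 6 := by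
    calc (#(Q.biUnion E₂) : ℝ) ≤ ∑ B ∈ Q, (#(E₂ B) : ℝ) := by exact_mod_cast Finset.card_biUnion_le
      _ ≤ ∑ B ∈ Q, N * x ^ 12 * x ^ minSide D B := Finset.sum_le_sum hE₂
      _ ≤ ∑ B ∈ D.powerset, N * x ^ 12 * x ^ minSide D B :=
        Finset.sum_le_sum_of_subset_of_nonneg (Finset.filter_subset _ _)
          fun _ _ _ => by positivity
      _ ≤ _ := by
        rw [← Finset.mul_sum]
        gcongr
  have h3 := (Nat.cast_le (α := ℝ)).2 ((Finset.card_le_card hsub).trans (Finset.card_union_le _ _))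
  push_cast at h3
  linarith

theorem one_sub_mul_card_le {Ω : Type*} [Fintype Ω] {p : Ω → Prop} [DecidablePred p]
    {s : Finset Ω} {δ : ℝ}
    (h : ∀ ω, ω ∉ s → p ω) (hs : (#s : ℝ) ≤ Fintype.card Ω * δ) :
    (1 - δ) * Fintype.card Ω ≤ #{ω | p ω} := by
  have h1 : (Finset.univ : Finset Ω) ⊆ Finset.univ.filter p ∪ s := fun ω _ => by
    have := h ω
    simp only [Finset.mem_union, Finset.mem_filter, Finset.mem_univ, true_and]
    tauto
  have h2 := (Nat.cast_le (α := ℝ)).2 ((Finset.card_le_card h1).trans (Finset.card_union_le _ _))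
  rw [Finset.card_univ] at h2
  push_cast at h2
  linarith

/-- Lemma 2 of the paper.  There is a universal constant `c₂ > 0` such
that the following holds.  Let `ε ∈ (0,1)`, `|V| = n ≥ 2`, and let `q` be an integer with
`q ≥ c₂ k² (log n)/ε⁴`.  Fix a pivotal `k`-clustering `C` (assignment `Cl`) with all
clusters nonempty (so that uniform sampling from each `C_{i₂}` is well defined).  For each
`i₂ ∈ [k]` and `u ∈ V`, the sample `S_{u i₂}` consists of `q` points drawn independently
and uniformly with replacement from `C_{i₂}`; the family of samples is a uniform element
`ω` of `Ω = Π (u : V) (i₂ : Fin k), Fin q → C_{i₂}`.  Then with probability at least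
`1 − n⁻³`, simultaneously for all `k`-clusterings `C'` and all `i₁ < i₂`, `j` in `[k]`:
`|F_{i₁,i₂,j}(C') − F̂_{i₁,i₂,j}(C')|
  ≤ ε·max{|C_{i₁j} × C_{i₂j}|, |C_{i₁j} × (C_{i₁}\C_{i₁j})|/k, |C_{i₂j} × (C_{i₂}\C_{i₂j})|/k}`. -/
theorem stmt15 :
    ∃ c₂ : ℝ, 0 < c₂ ∧
      ∀ (V : Type) [Fintype V] (k q : ℕ) (G : SimpleGraph V) (Cl : V → Fin k),
        (∀ i : Fin k, ∃ v : V, Cl v = i) →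
        ∀ ε : ℝ, 0 < ε → ε < 1 → 2 ≤ Fintype.card V →
        c₂ * (k : ℝ) ^ 2 * Real.log (Fintype.card V) / ε ^ 4 ≤ (q : ℝ) →
        1 - (Fintype.card V : ℝ) ^ (-3 : ℤ) ≤
          ((Finset.univ.filter fun ω : ∀ _u : V, ∀ i₂ : Fin k, Fin q → {v : V // Cl v = i₂} =>
              ∀ (Cl' : V → Fin k) (i₁ i₂ j : Fin k), i₁ < i₂ →
                |(∑ u ∈ cluster Cl i₁ ∩ cluster Cl' j,
                      ∑ v ∈ cluster Cl i₂ ∩ cluster Cl' j, fuv G Cl Cl' u v)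
                  - ((cluster Cl i₂).card : ℝ) / (q : ℝ) *
                      ∑ u ∈ cluster Cl i₁ ∩ cluster Cl' j, ∑ s : Fin q,
                        if (ω u i₂ s).1 ∈ cluster Cl i₂ ∩ cluster Cl' j then
                          fuv G Cl Cl' u (ω u i₂ s).1
                        else 0|
                ≤ ε * max
                    (((cluster Cl i₁ ∩ cluster Cl' j).card : ℝ) *
                      ((cluster Cl i₂ ∩ cluster Cl' j).card : ℝ))
                    (max
                      (((cluster Cl i₁ ∩ cluster Cl' j).card : ℝ) *
                          ((cluster Cl i₁ \ (cluster Cl i₁ ∩ cluster Cl' j)).card : ℝ) / (k : ℝ))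
                      (((cluster Cl i₂ ∩ cluster Cl' j).card : ℝ) *
                          ((cluster Cl i₂ \ (cluster Cl i₂ ∩ cluster Cl' j)).card : ℝ) / (k : ℝ)))).card : ℝ)
            / (Fintype.card (∀ _u : V, ∀ i₂ : Fin k, Fin q → {v : V // Cl v = i₂}) : ℝ) := by
  refine ⟨2000, by norm_num, fun V _ k q G Cl hCl ε hε hε1 hn hq => ?_⟩
  have hn0 : 0 < Fintype.card V := by omega
  obtain ⟨v₀⟩ := Fintype.card_pos_iff.1 hn0
  have hk : 0 < k := (Cl v₀).pos
  have hkn : k ≤ Fintype.card V := by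
    simpa using Fintype.card_le_of_surjective Cl hCl
  have hn' : (2 : ℝ) ≤ Fintype.card V := by exact_mod_cast hn
  have hL : 0 < Real.log (Fintype.card V) := Real.log_pos (by linarith)
  have hq0 : 0 < q := by
    have : (0 : ℝ) < q := lt_of_lt_of_le (by positivity) hq
    exact_mod_cast this
  have : ∀ i : Fin k, Nonempty {v : V // Cl v = i} := fun i => ⟨⟨_, (hCl i).choose_spec⟩⟩
  have hN : (0 : ℝ) < Fintype.card (Samples Cl q) := by exact_mod_cast Fintype.card_pos
  let bad (p : Fin k × Fin k) : Finset (Samples Cl q) :=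
    {ω | ∃ A ⊆ cluster Cl p.1, ∃ B ⊆ cluster Cl p.2,
      ε * slack k (cluster Cl p.1) (cluster Cl p.2) A B <
        |(∑ u ∈ A, ∑ v ∈ B, joinCost G u v)
          - #(cluster Cl p.2) / q * sampleSum (joinCost G) p.2 A B ω|}
  have hbad : (#(Finset.univ.biUnion bad) : ℝ) ≤
      Fintype.card (Samples Cl q) * (Fintype.card V : ℝ) ^ (-3 : ℤ) := by
    calc (#(Finset.univ.biUnion bad) : ℝ) ≤ ∑ p, (#(bad p) : ℝ) := by
          exact_mod_cast Finset.card_biUnion_le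
      _ ≤ ∑ _p : Fin k × Fin k, Fintype.card (Samples Cl q) *
          (78 * ((Fintype.card V : ℝ)⁻¹) ^ 12) := Finset.sum_le_sum fun p _ =>
        card_bad_pair_le Cl p.2 (cluster Cl p.1) hn0 hk hq0 hε hε1 hq (abs_joinCost_le G)
      _ = Fintype.card (Samples Cl q) * ((k : ℝ) ^ 2 * 78 * ((Fintype.card V : ℝ)⁻¹) ^ 12) := by
        simp
        ring
      _ ≤ _ := by
        gcongr
        have hkn' : (k : ℝ) ≤ Fintype.card V := by exact_mod_cast hkn
        have h7 : (78 : ℝ) ≤ (Fintype.card V : ℝ) ^ 7 :=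
          le_trans (by norm_num) (pow_le_pow_left₀ (by norm_num) hn' 7)
        calc (k : ℝ) ^ 2 * 78 * ((Fintype.card V : ℝ)⁻¹) ^ 12
            ≤ (Fintype.card V : ℝ) ^ 2 * (Fintype.card V : ℝ) ^ 7 *
              ((Fintype.card V : ℝ)⁻¹) ^ 12 := by gcongr
          _ = _ := by
            rw [zpow_neg]
            field_simp
  rw [le_div_iff₀ hN]
  refine one_sub_mul_card_le (Ω := Samples Cl q) (s := Finset.univ.biUnion bad)
    (fun ω hω Cl' i₁ i₂ j hij => ?_) hbad
  by_contra hlt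
  refine hω (Finset.mem_biUnion.2 ⟨(i₁, i₂), Finset.mem_univ _, Finset.mem_filter.2
    ⟨Finset.mem_univ _, _, Finset.inter_subset_left (s₂ := cluster Cl' j), _,
      Finset.inter_subset_left (s₂ := cluster Cl' j), ?_⟩⟩)
  have hf {u v : V} (hu : u ∈ cluster Cl i₁ ∩ cluster Cl' j)
      (hv : v ∈ cluster Cl i₂ ∩ cluster Cl' j) : fuv G Cl Cl' u v = joinCost G u v := by
    simp only [cluster, Finset.mem_inter, Finset.mem_filter, Finset.mem_univ, true_and] at hu hv
    exact fuv_eq_joinCost G (by rw [hu.1, hv.1]; exact hij.ne) (by rw [hu.2, hv.2])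
  refine (not_le.1 hlt).trans_eq ?_
  unfold sampleSum
  congr 2
  · exact Finset.sum_congr rfl fun u hu => Finset.sum_congr rfl fun v hv => hf hu hv
  · congr 1
    refine Finset.sum_congr rfl fun u hu => Finset.sum_congr rfl fun s _ => ?_
    split_ifs with hv
    · exact hf hu hv
    · rfl
end

section
/- There is a universal constant c₂ > 0 such that the following holds. Let ε ∈ (0,1), n ≥ 2, and let q be an integer with q ≥ c₂ k² (log n)/ε⁴. Then with probability at least 1 − 2n^{−3} over the random samples, simultaneously for all k-clusterings C' of V: |f(C') − f̂(C')| ≤ 3ε·d(C, C'), i.e., f̂ is a 3ε-smooth relative regret approximation with respect to the pivotal clustering C. -/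
open Finset

attribute [local instance] Classical.propDecidable

theorem sum_pi_prod_le {ι : Type*} [Fintype ι] [DecidableEq ι] {α : ι → Type*}
    [∀ i, Fintype (α i)] (f : ∀ i, α i → ℝ) (c : ι → ℝ) (hf : ∀ i x, 0 ≤ f i x)
    (hc : ∀ i, ∑ x, f i x ≤ Fintype.card (α i) * c i) :
    ∑ x : ∀ i, α i, ∏ i, f i (x i) ≤ Fintype.card (∀ i, α i) * ∏ i, c i := by
  have h : ∑ x : ∀ i, α i, ∏ i, f i (x i) = ∏ i, ∑ x, f i x := by
    rw [Finset.prod_univ_sum, Fintype.piFinset_univ]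
  rw [h, Fintype.card_pi, Nat.cast_prod, ← Finset.prod_mul_distrib]
  exact Finset.prod_le_prod (fun i _ => Finset.sum_nonneg fun x _ => hf i x) fun i _ => hc i

theorem sum_exp_sub_mean_le {β : Type*} [Fintype β] [Nonempty β] (f : β → ℝ)
    (hf : ∀ x, |f x| ≤ 1) :
    ∑ x, Real.exp (f x - (∑ y, f y) / Fintype.card β) ≤
      Fintype.card β * Real.exp ((∑ x, f x ^ 2) / Fintype.card β) := by
  set N : ℝ := (Fintype.card β : ℝ)
  have hN : 0 < N := by simp only [N]; exact_mod_cast Fintype.card_pos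
  have h1 : ∑ x, Real.exp (f x) ≤ N * Real.exp ((∑ y, f y) / N + (∑ x, f x ^ 2) / N) := by
    calc ∑ x, Real.exp (f x) ≤ ∑ x, (1 + f x + f x ^ 2) := by
          refine Finset.sum_le_sum fun x _ => ?_
          have := abs_le.1 (Real.abs_exp_sub_one_sub_id_le (hf x))
          linarith [this.2]
      _ = N * ((∑ y, f y) / N + (∑ x, f x ^ 2) / N + 1) := by
          rw [Finset.sum_add_distrib, Finset.sum_add_distrib]
          simp only [Finset.sum_const, Finset.card_univ, nsmul_eq_mul, mul_one]
          field_simp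
          ring
      _ ≤ _ := by
          gcongr
          exact Real.add_one_le_exp _
  simp only [Real.exp_sub, ← Finset.sum_div]
  rw [div_le_iff₀ (Real.exp_pos _), mul_assoc, ← Real.exp_add]
  rwa [add_comm (_ / N)] at h1

theorem bernstein_bound_le {δ η ni nj a b α β : ℝ} (hδ0 : 0 ≤ δ) (hδ1 : δ ≤ 1)
    (hη : η ≤ (δ / 25) ^ 2) (ha : 1 ≤ a) (hb : 1 ≤ b) (hα0 : 0 ≤ α) (hαa : α ≤ a)
    (hαi : α ≤ ni - a) (hβ0 : 0 ≤ β) (hβb : β ≤ b) (hβj : β ≤ nj - b)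
    (hcase : nj < 2 * b ∨ δ * nj ≤ 8 * ni) :
    2 * √(a * b * (η * nj * (α + β + 1))) + 2 * (η * nj * (α + β + 1)) ≤
      δ * (a * b + a * (ni - a) + b * (nj - b)) := by
  set X := a * b with hX
  set Y := a * (ni - a) with hY
  set Z := b * (nj - b) with hZ
  have hX0 : 0 ≤ X := by positivity
  have hY0 : 0 ≤ Y := mul_nonneg (by linarith) (by linarith)
  have hZ0 : 0 ≤ Z := mul_nonneg (by linarith) (by linarith)
  have hnj : 0 ≤ nj := by linarith
  have hni : 0 ≤ ni := by linarith
  have haY : a * α ≤ Y := mul_le_mul_of_nonneg_left hαi (by linarith)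
  have key : X * (nj * (α + β + 1)) ≤ 4 * (X + Y + Z) ^ 2 ∧
      δ * (nj * (α + β + 1)) ≤ 16 * (X + Y + Z) := by
    rcases lt_or_ge nj (2 * b) with hj | hj
    · have h1 : b * α ≤ X := by nlinarith
      have h2 : b ≤ X := by nlinarith
      have h3 : b * β ≤ Z := mul_le_mul_of_nonneg_left hβj (by linarith)
      have h4 : nj * (α + β + 1) ≤ 4 * (X + Y + Z) := by
        have : nj * (α + β + 1) ≤ 2 * b * (α + β + 1) := by gcongr
        linarith
      have h5 : 0 ≤ nj * (α + β + 1) := by positivity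
      constructor
      · have : X * (nj * (α + β + 1)) ≤ (X + Y + Z) * (4 * (X + Y + Z)) := by
          gcongr
          linarith
        linarith
      · nlinarith
    · have hi : δ * nj ≤ 8 * ni := hcase.resolve_left (not_lt.2 hj)
      have h1 : nj * b ≤ 2 * Z := by nlinarith
      have h2 : nj * (β + 1) ≤ 4 * Z := by
        have : nj * (β + 1) ≤ nj * (2 * b) := by
          gcongr
          linarith
        linarith
      constructor
      · have h3 : X * (nj * α) ≤ Y * (2 * Z) := by
          calc X * (nj * α) = (a * α) * (nj * b) := by rw [hX]; ring
            _ ≤ _ := by gcongr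
        have h4 : X * (nj * (β + 1)) ≤ X * (4 * Z) := by gcongr
        nlinarith [mul_nonneg hX0 hY0, mul_nonneg hX0 hZ0, mul_nonneg hY0 hZ0]
      · have h3 : ni * α ≤ 2 * Y := by
          rcases le_total (2 * a) ni with h | h <;> nlinarith
        have h4 : δ * nj * α ≤ 8 * ni * α := by gcongr
        have h5 : δ * (nj * (β + 1)) ≤ 1 * (4 * Z) := by gcongr
        linarith
  set S := X + Y + Z
  have hS : 0 ≤ S := by positivity
  set t := nj * (α + β + 1) with ht
  have ht0 : 0 ≤ t := by positivity
  have e : η * nj * (α + β + 1) = η * t := by rw [ht]; ring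
  rw [e]
  have hsq : √(X * (η * t)) ≤ 2 * δ / 25 * S := by
    refine Real.sqrt_le_iff.2 ⟨by positivity, ?_⟩
    calc X * (η * t) = η * (X * t) := by ring
      _ ≤ (δ / 25) ^ 2 * (4 * S ^ 2) := by
        exact mul_le_mul hη key.1 (by positivity) (by positivity)
      _ = _ := by ring
  have hW : η * t ≤ 16 * δ / 625 * S := by
    calc η * t ≤ (δ / 25) ^ 2 * t := by gcongr
      _ = δ / 625 * (δ * t) := by ring
      _ ≤ δ / 625 * (16 * S) := by
        exact mul_le_mul_of_nonneg_left key.2 (by positivity)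
      _ = _ := by ring
  nlinarith [mul_nonneg hδ0 hS]

theorem hitting_bound_le {δ η ni nj a b β : ℝ} (hδ0 : 0 ≤ δ) (hδ1 : δ ≤ 1)
    (hη0 : 0 ≤ η) (hη : η ≤ (δ / 25) ^ 2) (ha : 1 ≤ a) (hai : a ≤ ni) (hb : 1 ≤ b)
    (hβ0 : 0 ≤ β) (hβb : β ≤ b) (hj : 2 * b ≤ nj) (hij : 8 * ni ≤ δ * nj) :
    2 * (ni * b) + (2 * √(ni * b * (η * nj * (0 + β + 1))) + 2 * (η * nj * (0 + β + 1))) ≤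
      δ * (a * b + a * (ni - a) + b * (nj - b)) := by
  have hX0 : 0 ≤ a * b := by positivity
  have hY0 : 0 ≤ a * (ni - a) := mul_nonneg (by linarith) (by linarith)
  set Z := b * (nj - b) with hZ
  have hZ0 : 0 ≤ Z := mul_nonneg (by linarith) (by linarith)
  have hnj : 0 ≤ nj := by linarith
  have h1 : nj * b ≤ 2 * Z := by nlinarith
  have h2 : nj * (0 + β + 1) ≤ 4 * Z := by
    have : nj * (0 + β + 1) ≤ nj * (2 * b) := by
      gcongr
      linarith
    linarith
  have h3 : ni * b ≤ δ / 4 * Z := by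
    have : 8 * ni * b ≤ δ * nj * b := by gcongr
    nlinarith [mul_le_mul_of_nonneg_left h1 hδ0]
  have h4 : η * nj * (0 + β + 1) ≤ η * (4 * Z) := by
    rw [mul_assoc]
    gcongr
  have hni : 0 ≤ ni := by linarith
  have hsq : √(ni * b * (η * nj * (0 + β + 1))) ≤ δ / 25 * Z := by
    refine Real.sqrt_le_iff.2 ⟨by positivity, ?_⟩
    calc ni * b * (η * nj * (0 + β + 1)) ≤ (1 / 4 * Z) * ((δ / 25) ^ 2 * (4 * Z)) := by
          refine mul_le_mul (h3.trans (by gcongr)) (h4.trans (by gcongr)) (by positivity)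
            (by positivity)
      _ = _ := by ring
  have hW : η * (4 * Z) ≤ 4 * δ / 625 * Z := by
    have : η ≤ δ / 625 := by nlinarith
    calc η * (4 * Z) ≤ δ / 625 * (4 * Z) := by gcongr
      _ = _ := by ring
  nlinarith [mul_nonneg hδ0 hX0, mul_nonneg hδ0 hY0, mul_nonneg hδ0 hZ0]

/-- The smaller of the sizes of `A` and of its complement in `C`. -/
noncomputable def coSize {V : Type*} (C A : Finset V) : ℕ := min A.card (C.card - A.card)

theorem coSize_bounds {V : Type*} {C A : Finset V} (hA : A ⊆ C) :
    (0 : ℝ) ≤ coSize C A ∧ (coSize C A : ℝ) ≤ A.card ∧ (coSize C A : ℝ) ≤ C.card - A.card := by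
  refine ⟨Nat.cast_nonneg _, Nat.cast_le.2 (min_le_left _ _), ?_⟩
  rw [← Nat.cast_sub (Finset.card_le_card hA)]
  exact Nat.cast_le.2 (min_le_right _ _)

/-- The sign with which a pair enters the change of the cost when a clustering is changed on it. -/
noncomputable def pairSign {V : Type*} {k : ℕ} (G : SimpleGraph V) (Cl : V → Fin k) (u v : V) : ℝ :=
  if G.Adj u v ↔ Cl u = Cl v then 1 else -1

theorem abs_pairSign_le {V : Type*} {k : ℕ} (G : SimpleGraph V) (Cl : V → Fin k) (u v : V) :
    |pairSign G Cl u v| ≤ 1 := by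
  unfold pairSign
  split_ifs <;> simp

theorem fuv_eq {V : Type*} {k : ℕ} (G : SimpleGraph V) (Cl Cl' : V → Fin k) (u v : V) :
    fuv G Cl Cl' u v =
      if ¬ (Cl u = Cl v ↔ Cl' u = Cl' v) then pairSign G Cl u v else 0 := by
  by_cases h1 : G.Adj u v <;> by_cases h2 : Cl u = Cl v <;> by_cases h3 : Cl' u = Cl' v <;>
    simp [fuv, costuv, pairSign, h1, h2, h3]

theorem fuv_comm {V : Type*} {k : ℕ} (G : SimpleGraph V) (Cl Cl' : V → Fin k) (u v : V) :
    fuv G Cl Cl' u v = fuv G Cl Cl' v u := by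
  simp only [fuv, costuv, G.adj_comm u v, eq_comm (a := Cl u), eq_comm (a := Cl' u)]

/-- The deviation of the estimate of `∑ u ∈ A, ∑ v ∈ B, h u v` computed from the samples that the
points of `A` draw from cluster `j`. -/
noncomputable def sampleError {V : Type} [Fintype V] {k : ℕ} (q : ℕ) (Cl : V → Fin k)
    (h : V → V → ℝ) (j : Fin k) (A B : Finset V)
    (ω : ∀ _u : V, ∀ j : Fin k, Fin q → {v : V // Cl v = j}) : ℝ :=
  ((cluster Cl j).card : ℝ) / q *
      ∑ u ∈ A, ∑ s : Fin q, (if (ω u j s).1 ∈ B then h u (ω u j s).1 else 0) -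
    ∑ u ∈ A, ∑ v ∈ B, h u v

section Samples

variable {V : Type} [Fintype V] {k q : ℕ} {Cl : V → Fin k}

theorem mem_cluster {v : V} {i : Fin k} : v ∈ cluster Cl i ↔ Cl v = i := by
  simp [cluster]

theorem card_cluster_subtype (j : Fin k) :
    Fintype.card {v : V // Cl v = j} = (cluster Cl j).card := by
  rw [Fintype.card_subtype]; rfl

theorem sum_cluster_subtype (j : Fin k) (f : V → ℝ) :
    ∑ x : {v : V // Cl v = j}, f x.1 = ∑ v ∈ cluster Cl j, f v :=
  (Finset.sum_subtype _ (fun _ => mem_cluster) f).symm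

theorem sum_exp_sampleError_le (hq : 0 < q) (h : V → V → ℝ) (hh : ∀ u v, |h u v| ≤ 1)
    (j : Fin k) (hj : ∃ v, Cl v = j) (A B : Finset V) (hB : B ⊆ cluster Cl j) {θ : ℝ}
    (h0 : 0 ≤ θ) (h1 : θ ≤ 1) :
    ∑ ω, Real.exp (θ * (q / (cluster Cl j).card) * sampleError q Cl h j A B ω) ≤
      Fintype.card (∀ _u : V, ∀ j : Fin k, Fin q → {v : V // Cl v = j}) *
        Real.exp (θ ^ 2 * (q / (cluster Cl j).card) * (A.card * B.card)) := by
  set N : ℝ := ((cluster Cl j).card : ℝ) with hNdef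
  have hN : 0 < N := by
    obtain ⟨v, hv⟩ := hj
    exact Nat.cast_pos.2 (Finset.card_pos.2 ⟨v, mem_cluster.2 hv⟩)
  have hq' : (0 : ℝ) < q := by exact_mod_cast hq
  let ψ : V → V → ℝ := fun u x => θ * (if x ∈ B then h u x else 0) - θ * (∑ v ∈ B, h u v) / N
  let f : V → Fin k → V → ℝ := fun u j' x => if u ∈ A ∧ j' = j then Real.exp (ψ u x) else 1
  let c : V → Fin k → ℝ := fun u j' => if u ∈ A ∧ j' = j then Real.exp (θ ^ 2 * B.card / N) else 1
  have hf : ∀ u j' x, 0 ≤ f u j' x := by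
    intro u j' x
    simp only [f]
    split_ifs <;> positivity
  have hc : ∀ u j', ∑ x : {v : V // Cl v = j'}, f u j' x.1 ≤
      Fintype.card {v : V // Cl v = j'} * c u j' := by
    intro u j'
    by_cases hu : u ∈ A ∧ j' = j
    · obtain ⟨hu, rfl⟩ := hu
      have : Nonempty {v : V // Cl v = j'} := let ⟨v, hv⟩ := hj; ⟨⟨v, hv⟩⟩
      have key := sum_exp_sub_mean_le
        (fun x : {v : V // Cl v = j'} => θ * (if x.1 ∈ B then h u x.1 else 0)) (by
          intro x
          rw [abs_mul, abs_of_nonneg h0]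
          split_ifs
          · exact mul_le_one₀ h1 (abs_nonneg _) (hh _ _)
          · simp)
      have e1 : ∑ x : {v : V // Cl v = j'}, θ * (if x.1 ∈ B then h u x.1 else 0) =
          θ * ∑ v ∈ B, h u v := by
        rw [← Finset.mul_sum, sum_cluster_subtype j' fun x => if x ∈ B then h u x else 0,
          Finset.sum_ite_mem, Finset.inter_eq_right.2 hB]
      have e2 : ∑ x : {v : V // Cl v = j'}, (θ * (if x.1 ∈ B then h u x.1 else 0)) ^ 2 ≤
          θ ^ 2 * B.card := by
        rw [sum_cluster_subtype j' fun x => (θ * (if x ∈ B then h u x else 0)) ^ 2]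
        calc _ ≤ ∑ v ∈ cluster Cl j', if v ∈ B then θ ^ 2 else 0 := by
              refine Finset.sum_le_sum fun v _ => ?_
              split_ifs
              · rw [mul_pow]
                exact mul_le_of_le_one_right (sq_nonneg _) ((sq_le_one_iff_abs_le_one _).2 (hh _ _))
              · simp
          _ = _ := by
              rw [Finset.sum_ite_mem, Finset.inter_eq_right.2 hB, Finset.sum_const, nsmul_eq_mul,
                mul_comm]
      rw [e1, card_cluster_subtype, ← hNdef] at key
      simp only [f, c, hu, and_self, if_true, ψ]
      rw [card_cluster_subtype, ← hNdef]
      refine key.trans ?_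
      gcongr
    · simp [f, c, hu]
  have hexp : ∀ ω : ∀ _u : V, ∀ j : Fin k, Fin q → {v : V // Cl v = j},
      Real.exp (θ * (q / N) * sampleError q Cl h j A B ω) =
        ∏ u, ∏ j', ∏ s : Fin q, f u j' (ω u j' s).1 := by
    intro ω
    have e : θ * (q / N) * sampleError q Cl h j A B ω =
        ∑ u ∈ A, ∑ s : Fin q, ψ u (ω u j s).1 := by
      simp only [sampleError, ψ, Finset.sum_sub_distrib, Finset.sum_const, Finset.card_univ,
        Fintype.card_fin, nsmul_eq_mul, ← Finset.mul_sum, ← Finset.sum_div]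
      rw [← hNdef]
      field_simp
    rw [e, Real.exp_sum, ← Finset.prod_subset (Finset.subset_univ A)]
    · refine Finset.prod_congr rfl fun u hu => ?_
      rw [Real.exp_sum, Finset.prod_eq_single j]
      · simp [f, hu]
      · intro j' _ hj'
        simp [f, hj']
      · simp
    · intro u _ hu
      simp [f, hu]
  have hprod : Real.exp (θ ^ 2 * (q / N) * (A.card * B.card)) =
      ∏ u, ∏ j', ∏ _s : Fin q, c u j' := by
    rw [← Finset.prod_subset (Finset.subset_univ A)]
    · rw [Finset.prod_congr rfl (g := fun _ => Real.exp (θ ^ 2 * B.card / N) ^ q)]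
      · rw [Finset.prod_const, ← pow_mul, ← Real.exp_nat_mul]
        congr 1
        push_cast
        field_simp
      · intro u hu
        rw [Finset.prod_eq_single j]
        · simp [c, hu]
        · intro j' _ hj'
          simp [c, hj']
        · simp
    · intro u _ hu
      simp [c, hu]
  simp only [hexp, hprod]
  refine sum_pi_prod_le (fun u (x : ∀ j : Fin k, Fin q → {v : V // Cl v = j}) =>
    ∏ j', ∏ s : Fin q, f u j' (x j' s).1) _ (fun u x => ?_) fun u => ?_
  · exact Finset.prod_nonneg fun _ _ => Finset.prod_nonneg fun _ _ => hf _ _ _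
  refine sum_pi_prod_le (fun j' (x : Fin q → {v : V // Cl v = j'}) =>
    ∏ s : Fin q, f u j' (x s).1) _ (fun j' x => ?_) fun j' => ?_
  · exact Finset.prod_nonneg fun _ _ => hf _ _ _
  exact sum_pi_prod_le (fun _ (x : {v : V // Cl v = j'}) => f u j' x.1) _
    (fun _ _ => hf _ _ _) fun _ => hc u j'

theorem card_lt_sampleError_le (hq : 0 < q) (h : V → V → ℝ) (hh : ∀ u v, |h u v| ≤ 1)
    (j : Fin k) (hj : ∃ v, Cl v = j) (A B : Finset V) (hB : B ⊆ cluster Cl j) {W : ℝ}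
    (hW : 0 ≤ W) :
    ((Finset.univ.filter fun ω => 2 * √(A.card * B.card * W) + 2 * W <
        sampleError q Cl h j A B ω).card : ℝ) ≤
      Fintype.card (∀ _u : V, ∀ j : Fin k, Fin q → {v : V // Cl v = j}) *
        Real.exp (-(q / (cluster Cl j).card * W)) := by
  obtain ⟨θ, h0, h1, hθ⟩ : ∃ θ : ℝ, 0 ≤ θ ∧ θ ≤ 1 ∧
      θ ^ 2 * (A.card * B.card) + W ≤ θ * (2 * √(A.card * B.card * W) + 2 * W) := by
    set X : ℝ := (A.card : ℝ) * B.card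
    have hX : 0 ≤ X := by positivity
    rcases le_or_gt X W with hXW | hXW
    · refine ⟨1, zero_le_one, le_rfl, ?_⟩
      have := Real.sqrt_nonneg (X * W)
      linarith
    · have hX' : 0 < X := hW.trans_lt hXW
      refine ⟨√(W / X), Real.sqrt_nonneg _, Real.sqrt_le_one.2 ((div_le_one hX').2 hXW.le), ?_⟩
      have e : √(W / X) * √(X * W) = W := by
        rw [← Real.sqrt_mul (by positivity), show W / X * (X * W) = W ^ 2 by field_simp,
          Real.sqrt_sq hW]
      rw [Real.sq_sqrt (by positivity), div_mul_cancel₀ _ hX'.ne', mul_add, mul_left_comm, e]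
      have : 0 ≤ √(W / X) * (2 * W) := by positivity
      linarith
  set T : ℝ := 2 * √(A.card * B.card * W) + 2 * W
  set r : ℝ := (q : ℝ) / (cluster Cl j).card
  have hr : 0 ≤ r := by positivity
  have key := sum_exp_sampleError_le hq h hh j hj A B hB h0 h1
  have markov : ((Finset.univ.filter fun ω => T < sampleError q Cl h j A B ω).card : ℝ) *
      Real.exp (θ * r * T) ≤ ∑ ω, Real.exp (θ * r * sampleError q Cl h j A B ω) := by
    rw [← nsmul_eq_mul, ← Finset.sum_const]
    refine (Finset.sum_le_sum fun ω hω => ?_).trans (Finset.sum_le_sum_of_subset_of_nonneg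
      (Finset.filter_subset _ _) fun _ _ _ => (Real.exp_pos _).le)
    have hω' := (Finset.mem_filter.1 hω).2.le
    gcongr
  rw [← le_div_iff₀ (Real.exp_pos _)] at markov
  refine markov.trans ?_
  rw [div_le_iff₀ (Real.exp_pos _), mul_assoc, ← Real.exp_add]
  refine key.trans ?_
  gcongr
  nlinarith [mul_le_mul_of_nonneg_left hθ hr]

theorem sum_powerset_pow_coSize_le (C : Finset V) {x : ℝ} (hx : 0 ≤ x)
    (hx' : Fintype.card V * x ≤ 1) : ∑ A ∈ C.powerset, x ^ coSize C A ≤ 6 := by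
  have h1 : ∀ A ∈ C.powerset, x ^ coSize C A ≤
      x ^ A.card * 1 ^ (C.card - A.card) + 1 ^ A.card * x ^ (C.card - A.card) := by
    intro A _
    have h1 : 0 ≤ x ^ A.card := by positivity
    have h2 : 0 ≤ x ^ (C.card - A.card) := by positivity
    rcases min_choice A.card (C.card - A.card) with h | h <;> rw [coSize, h] <;> simp [h1, h2]
  refine (Finset.sum_le_sum h1).trans ?_
  rw [Finset.sum_add_distrib, Finset.sum_pow_mul_eq_add_pow, Finset.sum_pow_mul_eq_add_pow,
    add_comm 1 x]
  have h2 : (x + 1) ^ C.card ≤ 3 := by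
    calc (x + 1) ^ C.card ≤ Real.exp x ^ C.card := by
          gcongr
          exact Real.add_one_le_exp x
      _ = Real.exp (C.card * x) := (Real.exp_nat_mul _ _).symm
      _ ≤ Real.exp 1 := by
          refine Real.exp_le_exp.2 (le_trans ?_ hx')
          gcongr
          exact Finset.card_le_univ C
      _ ≤ 3 := Real.exp_one_lt_three.le
  linarith

/-- All sample errors for `h` obey the upper bound that Bernstein's inequality predicts. -/
def SampleGood (q : ℕ) (Cl : V → Fin k) (η : ℝ) (h : V → V → ℝ)
    (ω : ∀ _u : V, ∀ j : Fin k, Fin q → {v : V // Cl v = j}) : Prop :=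
  ∀ i j : Fin k, ∀ A ⊆ cluster Cl i, ∀ B ⊆ cluster Cl j,
    sampleError q Cl h j A B ω ≤
      2 * √(A.card * B.card * (η * (cluster Cl j).card *
        (coSize (cluster Cl i) A + coSize (cluster Cl j) B + 1))) +
      2 * (η * (cluster Cl j).card * (coSize (cluster Cl i) A + coSize (cluster Cl j) B + 1))

theorem card_not_sampleGood_le (hq : 0 < q) (hCl : ∀ j : Fin k, ∃ v, Cl v = j)
    (hn : 2 ≤ Fintype.card V) (h : V → V → ℝ) (hh : ∀ u v, |h u v| ≤ 1) :
    ((Finset.univ.filter fun ω =>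
        ¬ SampleGood q Cl (12 * Real.log (Fintype.card V) / q) h ω).card : ℝ) ≤
      Fintype.card (∀ _u : V, ∀ j : Fin k, Fin q → {v : V // Cl v = j}) *
        (((Fintype.card V : ℝ) ^ 3)⁻¹ / 2) := by
  set n : ℝ := (Fintype.card V : ℝ) with hndef
  have hn2 : (2 : ℝ) ≤ n := by simp only [n]; exact_mod_cast hn
  have hn0 : 0 < n := by linarith
  have hq' : (0 : ℝ) < q := by exact_mod_cast hq
  have hlog : 0 ≤ Real.log n := Real.log_nonneg (by linarith)
  set η : ℝ := 12 * Real.log n / q with hη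
  set M : ℝ :=
    (Fintype.card (∀ _u : V, ∀ j : Fin k, Fin q → {v : V // Cl v = j}) : ℝ) with hM
  set x : ℝ := (n ^ 12)⁻¹ with hx
  have hx0 : 0 ≤ x := by positivity
  have hx1 : n * x ≤ 1 := by
    rw [hx, ← div_eq_mul_inv, div_le_one (by positivity)]
    exact le_self_pow₀ (by linarith) (by norm_num)
  let bad : Fin k → Fin k → Finset V → Finset V →
      Finset (∀ _u : V, ∀ j : Fin k, Fin q → {v : V // Cl v = j}) := fun i j A B =>
    Finset.univ.filter fun ω =>
      2 * √(A.card * B.card * (η * (cluster Cl j).card *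
        (coSize (cluster Cl i) A + coSize (cluster Cl j) B + 1))) +
      2 * (η * (cluster Cl j).card * (coSize (cluster Cl i) A + coSize (cluster Cl j) B + 1)) <
      sampleError q Cl h j A B ω
  have hbad : ∀ i j A B, B ⊆ cluster Cl j → ((bad i j A B).card : ℝ) ≤
      M * (x * (x ^ coSize (cluster Cl i) A * x ^ coSize (cluster Cl j) B)) := by
    intro i j A B hB
    refine (card_lt_sampleError_le hq h hh j (hCl j) A B hB (by positivity)).trans (le_of_eq ?_)
    rw [← hM]
    congr 1
    have hN : (0 : ℝ) < (cluster Cl j).card := by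
      obtain ⟨v, hv⟩ := hCl j
      exact_mod_cast Finset.card_pos.2 ⟨v, mem_cluster.2 hv⟩
    have e : x = Real.exp (-(12 * Real.log n)) := by
      rw [Real.exp_neg, hx, mul_comm, Real.exp_mul, Real.exp_log hn0]
      norm_cast
    rw [e, ← Real.exp_nat_mul, ← Real.exp_nat_mul, ← Real.exp_add, ← Real.exp_add]
    congr 1
    rw [hη]
    field_simp
    ring
  have hsub : (Finset.univ.filter fun ω => ¬ SampleGood q Cl η h ω) ⊆
      Finset.univ.biUnion fun i => Finset.univ.biUnion fun j =>
        (cluster Cl i).powerset.biUnion fun A => (cluster Cl j).powerset.biUnion fun B =>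
          bad i j A B := by
    intro ω hω
    have hω' := (Finset.mem_filter.1 hω).2
    simp only [SampleGood, not_forall, not_le] at hω'
    obtain ⟨i, j, A, hA, B, hB, hlt⟩ := hω'
    simp only [Finset.mem_biUnion, Finset.mem_univ, true_and, Finset.mem_powerset]
    exact ⟨i, j, A, hA, B, hB, Finset.mem_filter.2 ⟨Finset.mem_univ _, hlt⟩⟩
  have hcard : (Finset.univ.filter fun ω => ¬ SampleGood q Cl η h ω).card ≤
      ∑ i, ∑ j, ∑ A ∈ (cluster Cl i).powerset, ∑ B ∈ (cluster Cl j).powerset,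
        (bad i j A B).card :=
    (Finset.card_le_card hsub).trans <| Finset.card_biUnion_le.trans <|
      Finset.sum_le_sum fun i _ => Finset.card_biUnion_le.trans <|
      Finset.sum_le_sum fun j _ => Finset.card_biUnion_le.trans <|
      Finset.sum_le_sum fun A _ => Finset.card_biUnion_le
  have hM0 : 0 ≤ M := by positivity
  have hk : (k : ℝ) ≤ n := by
    have := Fintype.card_le_of_surjective Cl hCl
    rw [Fintype.card_fin] at this
    exact Nat.cast_le.2 this
  calc ((Finset.univ.filter fun ω => ¬ SampleGood q Cl η h ω).card : ℝ)
      ≤ ∑ i, ∑ j, ∑ A ∈ (cluster Cl i).powerset, ∑ B ∈ (cluster Cl j).powerset,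
        ((bad i j A B).card : ℝ) := by exact_mod_cast hcard
    _ ≤ ∑ i, ∑ j, ∑ A ∈ (cluster Cl i).powerset, ∑ B ∈ (cluster Cl j).powerset,
        M * (x * (x ^ coSize (cluster Cl i) A * x ^ coSize (cluster Cl j) B)) := by
        refine Finset.sum_le_sum fun i _ => Finset.sum_le_sum fun j _ =>
          Finset.sum_le_sum fun A _ => Finset.sum_le_sum fun B hB => ?_
        exact hbad i j A B (Finset.mem_powerset.1 hB)
    _ = ∑ i, ∑ j, M * (x * ((∑ A ∈ (cluster Cl i).powerset, x ^ coSize (cluster Cl i) A) *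
          ∑ B ∈ (cluster Cl j).powerset, x ^ coSize (cluster Cl j) B)) := by
        refine Finset.sum_congr rfl fun i _ => Finset.sum_congr rfl fun j _ => ?_
        rw [Finset.sum_mul_sum]
        simp only [Finset.mul_sum]
    _ ≤ ∑ _i : Fin k, ∑ _j : Fin k, M * (x * (6 * 6)) := by
        refine Finset.sum_le_sum fun i _ => Finset.sum_le_sum fun j _ => ?_
        have h1 := sum_powerset_pow_coSize_le (cluster Cl i) hx0 hx1
        have h2 := sum_powerset_pow_coSize_le (cluster Cl j) hx0 hx1
        have h3 : 0 ≤ ∑ B ∈ (cluster Cl j).powerset, x ^ coSize (cluster Cl j) B :=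
          Finset.sum_nonneg fun _ _ => by positivity
        exact mul_le_mul_of_nonneg_left (mul_le_mul_of_nonneg_left
          (mul_le_mul h1 h2 h3 (by norm_num)) hx0) hM0
    _ = M * (x * 36 * (k * k)) := by
        simp only [Finset.sum_const, Finset.card_univ, Fintype.card_fin, nsmul_eq_mul]
        ring
    _ ≤ M * (x * n ^ 6 * (n * n)) := by
        have : (2 : ℝ) ^ 6 ≤ n ^ 6 := by gcongr
        gcongr
        linarith
    _ ≤ M * ((n ^ 3)⁻¹ / 2) := by
        have e : x * n ^ 6 * (n * n) = (n ^ 3)⁻¹ / n := by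
          rw [hx]
          field_simp
        rw [e]
        gcongr

theorem one_sub_le_card_div (hq : 0 < q) (hCl : ∀ j : Fin k, ∃ v, Cl v = j)
    (hn : 2 ≤ Fintype.card V) {h : V → V → ℝ} (hh : ∀ u v, |h u v| ≤ 1)
    (good : Finset (∀ _u : V, ∀ j : Fin k, Fin q → {v : V // Cl v = j}))
    (hgood : ∀ ω, SampleGood q Cl (12 * Real.log (Fintype.card V) / q) h ω →
      SampleGood q Cl (12 * Real.log (Fintype.card V) / q) (-h) ω →
      SampleGood q Cl (12 * Real.log (Fintype.card V) / q) (fun _ _ => 1) ω → ω ∈ good) :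
    1 - 2 * (Fintype.card V : ℝ) ^ (-3 : ℤ) ≤
      good.card / (Fintype.card (∀ _u : V, ∀ j : Fin k, Fin q → {v : V // Cl v = j}) : ℝ) := by
  set η : ℝ := 12 * Real.log (Fintype.card V) / q with hη
  set M : ℝ := (Fintype.card (∀ _u : V, ∀ j : Fin k, Fin q → {v : V // Cl v = j}) : ℝ) with hM
  have hM0 : 0 < M := by
    have : Nonempty (∀ _u : V, ∀ j : Fin k, Fin q → {v : V // Cl v = j}) :=
      ⟨fun _ j _ => ⟨(hCl j).choose, (hCl j).choose_spec⟩⟩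
    exact Nat.cast_pos.2 Fintype.card_pos
  have b1 := card_not_sampleGood_le hq hCl hn h hh
  have b2 := card_not_sampleGood_le hq hCl hn (-h) fun u v => by
    simpa using hh u v
  have b3 := card_not_sampleGood_le hq hCl hn (fun _ _ => 1) fun u v => by simp
  rw [← hη, ← hM] at b1 b2 b3
  rw [le_div_iff₀ hM0]
  have hcover : Finset.univ ⊆ good ∪ ((Finset.univ.filter fun ω => ¬ SampleGood q Cl η h ω) ∪
      ((Finset.univ.filter fun ω => ¬ SampleGood q Cl η (-h) ω) ∪
        Finset.univ.filter fun ω => ¬ SampleGood q Cl η (fun _ _ => 1) ω)) := by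
    intro ω _
    simp only [Finset.mem_union, Finset.mem_filter, Finset.mem_univ, true_and]
    by_contra hω
    simp only [not_or, not_not] at hω
    exact hω.1 (hgood ω hω.2.1 hω.2.2.1 hω.2.2.2)
  have hcard : M ≤ good.card + ((Finset.univ.filter fun ω => ¬ SampleGood q Cl η h ω).card +
      ((Finset.univ.filter fun ω => ¬ SampleGood q Cl η (-h) ω).card +
        (Finset.univ.filter fun ω => ¬ SampleGood q Cl η (fun _ _ => 1) ω).card)) := by
    have hle := (Finset.card_le_card hcover).trans <| (Finset.card_union_le _ _).trans <|
      Nat.add_le_add_left ((Finset.card_union_le _ _).trans <|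
        Nat.add_le_add_left (Finset.card_union_le _ _) _) _
    rw [Finset.card_univ] at hle
    rw [hM]
    exact_mod_cast hle
  have hz : ((Fintype.card V : ℝ)) ^ (-3 : ℤ) = ((Fintype.card V : ℝ) ^ 3)⁻¹ := by
    rw [zpow_neg]
    norm_cast
  have hpos : 0 ≤ M * ((Fintype.card V : ℝ) ^ 3)⁻¹ := by positivity
  rw [hz]
  linarith

theorem sampleError_neg (h : V → V → ℝ) (j : Fin k) (A B : Finset V)
    (ω : ∀ _u : V, ∀ j : Fin k, Fin q → {v : V // Cl v = j}) :
    sampleError q Cl (-h) j A B ω = -sampleError q Cl h j A B ω := by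
  have e : ∀ u : V, ∀ s : Fin q, (if (ω u j s).1 ∈ B then (-h) u (ω u j s).1 else 0) =
      -(if (ω u j s).1 ∈ B then h u (ω u j s).1 else 0) := by
    intro u s
    split_ifs <;> simp
  simp only [sampleError, e]
  simp only [Pi.neg_apply, Finset.sum_neg_distrib]
  ring

theorem abs_sampleError_le_hitting (h : V → V → ℝ) (hh : ∀ u v, |h u v| ≤ 1) (j : Fin k)
    {C A : Finset V} (hA : A ⊆ C) (B : Finset V)
    (ω : ∀ _u : V, ∀ j : Fin k, Fin q → {v : V // Cl v = j}) :
    |sampleError q Cl h j A B ω| ≤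
      2 * (C.card * B.card) + sampleError q Cl (fun _ _ => 1) j C B ω := by
  have h1 : |∑ u ∈ A, ∑ s : Fin q, (if (ω u j s).1 ∈ B then h u (ω u j s).1 else 0)| ≤
      ∑ u ∈ C, ∑ s : Fin q, (if (ω u j s).1 ∈ B then (1 : ℝ) else 0) := by
    refine (Finset.abs_sum_le_sum_abs _ _).trans ?_
    refine (Finset.sum_le_sum fun u _ => ?_).trans
      (Finset.sum_le_sum_of_subset_of_nonneg hA fun u _ _ => ?_)
    · refine (Finset.abs_sum_le_sum_abs _ _).trans (Finset.sum_le_sum fun s _ => ?_)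
      split_ifs
      · exact hh _ _
      · simp
    · exact Finset.sum_nonneg fun s _ => by split_ifs <;> simp
  have h2 : |∑ u ∈ A, ∑ v ∈ B, h u v| ≤ C.card * B.card := by
    calc |∑ u ∈ A, ∑ v ∈ B, h u v| ≤ ∑ u ∈ A, ∑ v ∈ B, (1 : ℝ) := by
          refine (Finset.abs_sum_le_sum_abs _ _).trans (Finset.sum_le_sum fun u _ => ?_)
          exact (Finset.abs_sum_le_sum_abs _ _).trans (Finset.sum_le_sum fun v _ => hh u v)
      _ = A.card * B.card := by simp
      _ ≤ C.card * B.card := by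
          gcongr
  have h3 : (0 : ℝ) ≤ ((cluster Cl j).card : ℝ) / q := by positivity
  refine (abs_sub _ _).trans ?_
  rw [abs_mul, abs_of_nonneg h3]
  have h4 := mul_le_mul_of_nonneg_left h1 h3
  have h5 : sampleError q Cl (fun _ _ => 1) j C B ω = ((cluster Cl j).card : ℝ) / q *
      ∑ u ∈ C, ∑ s : Fin q, (if (ω u j s).1 ∈ B then (1 : ℝ) else 0) - C.card * B.card := by
    simp [sampleError]
  linarith

theorem abs_sampleError_le {δ η : ℝ} (hδ0 : 0 ≤ δ) (hδ1 : δ ≤ 1) (hη0 : 0 ≤ η)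
    (hη : η ≤ (δ / 25) ^ 2) {h : V → V → ℝ} (hh : ∀ u v, |h u v| ≤ 1)
    {ω : ∀ _u : V, ∀ j : Fin k, Fin q → {v : V // Cl v = j}}
    (hpos : SampleGood q Cl η h ω) (hneg : SampleGood q Cl η (-h) ω)
    (hone : SampleGood q Cl η (fun _ _ => 1) ω) {i j : Fin k} {A B : Finset V}
    (hA : A ⊆ cluster Cl i) (hB : B ⊆ cluster Cl j) :
    |sampleError q Cl h j A B ω| ≤ δ * ((A.card : ℝ) * B.card +
      A.card * ((cluster Cl i).card - A.card) + B.card * ((cluster Cl j).card - B.card)) := by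
  have hAi : (A.card : ℝ) ≤ (cluster Cl i).card := Nat.cast_le.2 (Finset.card_le_card hA)
  have hBj : (B.card : ℝ) ≤ (cluster Cl j).card := Nat.cast_le.2 (Finset.card_le_card hB)
  rcases A.eq_empty_or_nonempty with rfl | hA0
  · have : (0 : ℝ) ≤ B.card * ((cluster Cl j).card - B.card) :=
      mul_nonneg (Nat.cast_nonneg _) (by linarith)
    simpa [sampleError] using mul_nonneg hδ0 this
  rcases B.eq_empty_or_nonempty with rfl | hB0
  · have : (0 : ℝ) ≤ A.card * ((cluster Cl i).card - A.card) :=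
      mul_nonneg (Nat.cast_nonneg _) (by linarith)
    simpa [sampleError] using mul_nonneg hδ0 this
  have ha : (1 : ℝ) ≤ A.card := by exact_mod_cast hA0.card_pos
  have hb : (1 : ℝ) ≤ B.card := by exact_mod_cast hB0.card_pos
  obtain ⟨hα0, hαa, hαi⟩ := coSize_bounds hA
  obtain ⟨hβ0, hβb, hβj⟩ := coSize_bounds hB
  by_cases hcase : ((cluster Cl j).card : ℝ) < 2 * B.card ∨
      δ * (cluster Cl j).card ≤ 8 * (cluster Cl i).card
  · have key := bernstein_bound_le hδ0 hδ1 hη ha hb hα0 hαa hαi hβ0 hβb hβj hcase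
    have h1 := (hpos i j A hA B hB).trans key
    have h2 := (hneg i j A hA B hB).trans key
    rw [sampleError_neg] at h2
    exact abs_le.2 ⟨by linarith, h1⟩
  · rw [not_or, not_lt, not_le] at hcase
    have h1 := hone i j _ Finset.Subset.rfl B hB
    have e : coSize (cluster Cl i) (cluster Cl i) = 0 := by simp [coSize]
    rw [e, Nat.cast_zero] at h1
    refine (abs_sampleError_le_hitting h hh j hA B ω).trans ((add_le_add_right h1 _).trans ?_)
    exact hitting_bound_le hδ0 hδ1 hη0 hη ha hAi hb hβ0 hβb hcase.1 hcase.2.le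

/-- The intersection of the `i`-th cluster of `Cl` with the `l`-th cluster of `Cl'`. -/
noncomputable def part (Cl Cl' : V → Fin k) (i l : Fin k) : Finset V :=
  (cluster Cl i).filter fun v => Cl' v = l

/-- The points of the `j`-th cluster of `Cl` on which `Cl` and `Cl'` disagree when paired with a
point of `part Cl Cl' i l`. -/
noncomputable def opposing (Cl Cl' : V → Fin k) (i j l : Fin k) : Finset V :=
  (cluster Cl j).filter fun v => ¬ (i = j ↔ l = Cl' v)

theorem sum_part (Cl Cl' : V → Fin k) (i : Fin k) (f : V → ℝ) :
    ∑ l, ∑ u ∈ part Cl Cl' i l, f u = ∑ u ∈ cluster Cl i, f u :=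
  Finset.sum_fiberwise _ _ _

theorem sum_cluster (Cl : V → Fin k) (f : V → ℝ) : ∑ i, ∑ u ∈ cluster Cl i, f u = ∑ u, f u :=
  Finset.sum_fiberwise _ _ _

theorem disagree_iff_mem_opposing {Cl Cl' : V → Fin k} {i j l : Fin k} {u v : V}
    (hu : u ∈ part Cl Cl' i l) (hv : v ∈ cluster Cl j) :
    ¬ (Cl u = Cl v ↔ Cl' u = Cl' v) ↔ v ∈ opposing Cl Cl' i j l := by
  obtain ⟨hu1, hu2⟩ := Finset.mem_filter.1 hu
  rw [opposing, Finset.mem_filter, mem_cluster.1 hu1, mem_cluster.1 hv, hu2]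
  simp [hv]

theorem sum_cluster_disagree (Cl Cl' : V → Fin k) (h : V → V → ℝ) (i j : Fin k) :
    ∑ u ∈ cluster Cl i, ∑ v ∈ cluster Cl j,
        (if ¬ (Cl u = Cl v ↔ Cl' u = Cl' v) then h u v else 0) =
      ∑ l, ∑ u ∈ part Cl Cl' i l, ∑ v ∈ opposing Cl Cl' i j l, h u v := by
  rw [← sum_part Cl Cl' i]
  refine Finset.sum_congr rfl fun l _ => Finset.sum_congr rfl fun u hu => ?_
  have hsub : opposing Cl Cl' i j l ⊆ cluster Cl j := Finset.filter_subset _ _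
  rw [Finset.sum_congr rfl fun v hv => if_congr (disagree_iff_mem_opposing hu hv) rfl rfl,
    Finset.sum_ite_mem, Finset.inter_eq_right.2 hsub]

theorem dd_eq (Cl Cl' : V → Fin k) :
    dd Cl Cl' = 1 / 2 * ∑ i, ∑ j, ∑ l,
      ((part Cl Cl' i l).card : ℝ) * (opposing Cl Cl' i j l).card := by
  have e : ∀ u v : V, (if u ≠ v then ((if Cl' u = Cl' v ∧ ¬Cl u = Cl v then (1 : ℝ) else 0) +
      (if Cl u = Cl v ∧ ¬Cl' u = Cl' v then (1 : ℝ) else 0)) else 0) =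
      if ¬ (Cl u = Cl v ↔ Cl' u = Cl' v) then (1 : ℝ) else 0 := by
    intro u v
    rcases eq_or_ne u v with rfl | h
    · simp
    · by_cases h2 : Cl u = Cl v <;> by_cases h3 : Cl' u = Cl' v <;> simp [h, h2, h3]
  simp only [dd, e]
  congr 1
  rw [← sum_cluster Cl]
  refine Finset.sum_congr rfl fun i _ => ?_
  simp only [← sum_cluster Cl fun v => if ¬ (Cl _ = Cl v ↔ Cl' _ = Cl' v) then (1 : ℝ) else 0]
  rw [Finset.sum_comm]
  refine Finset.sum_congr rfl fun j _ => ?_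
  rw [sum_cluster_disagree Cl Cl' (fun _ _ => 1)]
  simp

theorem dd_nonneg (Cl Cl' : V → Fin k) : 0 ≤ dd Cl Cl' := by
  rw [dd_eq]
  exact mul_nonneg (by norm_num) <| Finset.sum_nonneg fun i _ => Finset.sum_nonneg fun j _ =>
    Finset.sum_nonneg fun l _ => mul_nonneg (Nat.cast_nonneg _) (Nat.cast_nonneg _)

theorem sum_sum_eq_diag_add_two_mul {φ : Fin k → Fin k → ℝ} (hφ : ∀ i j, φ i j = φ j i) :
    ∑ i, ∑ j, φ i j = ∑ i, φ i i + 2 * ∑ i, ∑ j, if i < j then φ i j else 0 := by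
  have e : ∀ i j, φ i j = (if i = j then φ i i else 0) + (if i < j then φ i j else 0) +
      (if j < i then φ j i else 0) := by
    intro i j
    rcases lt_trichotomy i j with h | rfl | h
    · simp [h, h.ne, h.not_gt]
    · simp
    · simp [h, h.ne', h.not_gt, hφ i j]
  have e2 : ∑ i, ∑ j, (if j < i then φ j i else 0) = ∑ i, ∑ j, if i < j then φ i j else 0 :=
    Finset.sum_comm
  calc ∑ i, ∑ j, φ i j = ∑ i, ∑ j, ((if i = j then φ i i else 0) +
        (if i < j then φ i j else 0) + (if j < i then φ j i else 0)) :=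
        Finset.sum_congr rfl fun i _ => Finset.sum_congr rfl fun j _ => e i j
    _ = _ := by
        simp only [Finset.sum_add_distrib, e2, Finset.sum_ite_eq, Finset.mem_univ, if_true]
        ring

theorem cost_sub_cost (G : SimpleGraph V) (Cl Cl' : V → Fin k) :
    cost G Cl' - cost G Cl =
      1 / 2 * ∑ i, ∑ u ∈ cluster Cl i, ∑ v ∈ cluster Cl i, fuv G Cl Cl' u v +
      ∑ i, ∑ j, if i < j then ∑ u ∈ cluster Cl i, ∑ v ∈ cluster Cl j, fuv G Cl Cl' u v else 0 := by
  have e : cost G Cl' - cost G Cl = 1 / 2 * ∑ u, ∑ v, fuv G Cl Cl' u v := by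
    rw [cost, cost, ← mul_sub, ← Finset.sum_sub_distrib]
    congr 1
    refine Finset.sum_congr rfl fun u _ => ?_
    rw [← Finset.sum_sub_distrib]
    refine Finset.sum_congr rfl fun v _ => ?_
    rcases eq_or_ne u v with rfl | h
    · simp [fuv, costuv]
    · simp [h, fuv]
  have e2 : ∑ u, ∑ v, fuv G Cl Cl' u v =
      ∑ i, ∑ j, ∑ u ∈ cluster Cl i, ∑ v ∈ cluster Cl j, fuv G Cl Cl' u v := by
    rw [← sum_cluster Cl]
    refine Finset.sum_congr rfl fun i _ => ?_
    exact (Finset.sum_congr rfl fun u _ => (sum_cluster Cl _).symm).trans Finset.sum_comm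
  rw [e, e2, sum_sum_eq_diag_add_two_mul]
  · ring
  · intro i j
    rw [Finset.sum_comm]
    exact Finset.sum_congr rfl fun u _ => Finset.sum_congr rfl fun v _ => fuv_comm _ _ _ _ _

theorem blockError_eq (G : SimpleGraph V) (Cl' : V → Fin k)
    (ω : ∀ _u : V, ∀ j : Fin k, Fin q → {v : V // Cl v = j}) (i j : Fin k) :
    ((cluster Cl j).card : ℝ) / q *
        ∑ u ∈ cluster Cl i, ∑ s : Fin q, fuv G Cl Cl' u (ω u j s).1 -
      ∑ u ∈ cluster Cl i, ∑ v ∈ cluster Cl j, fuv G Cl Cl' u v =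
    ∑ l, sampleError q Cl (pairSign G Cl) j (part Cl Cl' i l) (opposing Cl Cl' i j l) ω := by
  simp only [sampleError, Finset.sum_sub_distrib, ← Finset.mul_sum]
  simp only [fuv_eq]
  rw [sum_cluster_disagree, ← sum_part Cl Cl' i]
  congr 2
  refine Finset.sum_congr rfl fun l _ => Finset.sum_congr rfl fun u hu =>
    Finset.sum_congr rfl fun s _ => ?_
  exact if_congr (disagree_iff_mem_opposing hu (mem_cluster.2 (ω u j s).2)) rfl rfl

theorem card_opposing_self (Cl Cl' : V → Fin k) (i l : Fin k) :
    ((opposing Cl Cl' i i l).card : ℝ) = (cluster Cl i).card - (part Cl Cl' i l).card := by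
  have := Finset.card_filter_add_card_filter_not (s := cluster Cl i) (fun v => Cl' v = l)
  rw [eq_sub_iff_add_eq', ← Nat.cast_add, ← this]
  simp [opposing, part, eq_comm (a := l)]

theorem opposing_of_ne (Cl Cl' : V → Fin k) {i j : Fin k} (h : i ≠ j) (l : Fin k) :
    opposing Cl Cl' i j l = part Cl Cl' j l := by
  simp [opposing, part, h, eq_comm (a := l)]

theorem card_opposing_mul (Cl Cl' : V → Fin k) (i j l : Fin k) :
    ((opposing Cl Cl' i j l).card : ℝ) * ((cluster Cl j).card - (opposing Cl Cl' i j l).card) =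
      (part Cl Cl' j l).card * (opposing Cl Cl' j j l).card := by
  rw [card_opposing_self]
  rcases eq_or_ne i j with rfl | h
  · rw [card_opposing_self]
    ring
  · rw [opposing_of_ne _ _ h]

theorem sum_abs_blockError_le {δ : ℝ} (hδ0 : 0 ≤ δ) {h : V → V → ℝ}
    {ω : ∀ _u : V, ∀ j : Fin k, Fin q → {v : V // Cl v = j}}
    (hω : ∀ i j : Fin k, ∀ A ⊆ cluster Cl i, ∀ B ⊆ cluster Cl j,
      |sampleError q Cl h j A B ω| ≤ δ * ((A.card : ℝ) * B.card +
        A.card * ((cluster Cl i).card - A.card) + B.card * ((cluster Cl j).card - B.card)))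
    (Cl' : V → Fin k) :
    ∑ i, ∑ j, |∑ l, sampleError q Cl h j (part Cl Cl' i l) (opposing Cl Cl' i j l) ω| ≤
      δ * ((2 + 4 * k) * dd Cl Cl') := by
  let m : Fin k → Fin k → ℝ := fun i j =>
    ∑ l, ((part Cl Cl' i l).card : ℝ) * (opposing Cl Cl' i j l).card
  have hm : ∀ i j, 0 ≤ m i j := fun i j => Finset.sum_nonneg fun l _ => by positivity
  have hd : ∑ i, ∑ j, m i j = 2 * dd Cl Cl' := by
    rw [dd_eq]
    ring
  have hblock : ∀ i j, |∑ l, sampleError q Cl h j (part Cl Cl' i l) (opposing Cl Cl' i j l) ω| ≤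
      δ * (m i j + m i i + m j j) := by
    intro i j
    refine (Finset.abs_sum_le_sum_abs _ _).trans ?_
    simp only [m]
    rw [← Finset.sum_add_distrib, ← Finset.sum_add_distrib, Finset.mul_sum]
    refine Finset.sum_le_sum fun l _ => ?_
    have := hω i j (part Cl Cl' i l) (Finset.filter_subset _ _) (opposing Cl Cl' i j l)
      (Finset.filter_subset _ _)
    rwa [card_opposing_mul, ← card_opposing_self] at this
  have hdiag : ∑ i, m i i ≤ 2 * dd Cl Cl' := by
    rw [← hd]
    exact Finset.sum_le_sum fun i _ =>
      Finset.single_le_sum (f := fun j => m i j) (fun j _ => hm i j) (Finset.mem_univ i)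
  calc _ ≤ ∑ i, ∑ j, δ * (m i j + m i i + m j j) :=
        Finset.sum_le_sum fun i _ => Finset.sum_le_sum fun j _ => hblock i j
    _ = δ * (∑ i, ∑ j, m i j + 2 * k * ∑ i, m i i) := by
        simp only [← Finset.mul_sum, Finset.sum_add_distrib, Finset.sum_const, Finset.card_univ,
          Fintype.card_fin, nsmul_eq_mul]
        ring
    _ ≤ δ * (2 * dd Cl Cl' + 2 * k * (2 * dd Cl Cl')) := by
        rw [hd]
        gcongr
    _ = _ := by ring

theorem abs_regret_sub_estimate_le (G : SimpleGraph V) (Cl' : V → Fin k)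
    (ω : ∀ _u : V, ∀ j : Fin k, Fin q → {v : V // Cl v = j}) :
    |(cost G Cl' - cost G Cl)
        - ((1 / 2) * ∑ i : Fin k, ((cluster Cl i).card : ℝ) / (q : ℝ) *
              ∑ u ∈ cluster Cl i, ∑ s : Fin q, fuv G Cl Cl' u (ω u i s).1
            + ∑ i : Fin k, ∑ u ∈ cluster Cl i, ∑ j : Fin k,
                if i < j then
                  ((cluster Cl j).card : ℝ) / (q : ℝ) *
                    ∑ s : Fin q, fuv G Cl Cl' u (ω u j s).1
                else 0)| ≤
      ∑ i, ∑ j, |∑ l, sampleError q Cl (pairSign G Cl) j (part Cl Cl' i l)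
        (opposing Cl Cl' i j l) ω| := by
  simp only [← blockError_eq G Cl' ω]
  set D : Fin k → Fin k → ℝ := fun i j => ((cluster Cl j).card : ℝ) / q *
      ∑ u ∈ cluster Cl i, ∑ s : Fin q, fuv G Cl Cl' u (ω u j s).1 -
    ∑ u ∈ cluster Cl i, ∑ v ∈ cluster Cl j, fuv G Cl Cl' u v with hD
  change _ ≤ ∑ i, ∑ j, |D i j|
  have e1 : ∀ i, ∑ u ∈ cluster Cl i, ∑ j : Fin k, (if i < j then
      ((cluster Cl j).card : ℝ) / (q : ℝ) * ∑ s : Fin q, fuv G Cl Cl' u (ω u j s).1 else 0) =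
      ∑ j, if i < j then ((cluster Cl j).card : ℝ) / (q : ℝ) *
        ∑ u ∈ cluster Cl i, ∑ s : Fin q, fuv G Cl Cl' u (ω u j s).1 else 0 := by
    intro i
    rw [Finset.sum_comm]
    refine Finset.sum_congr rfl fun j _ => ?_
    split_ifs
    · rw [Finset.mul_sum]
    · simp
  have e2 : ∑ i, ∑ j, (if i < j then D i j else 0) =
      (∑ i, ∑ j, if i < j then ((cluster Cl j).card : ℝ) / (q : ℝ) *
        ∑ u ∈ cluster Cl i, ∑ s : Fin q, fuv G Cl Cl' u (ω u j s).1 else 0) -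
      ∑ i, ∑ j, if i < j then ∑ u ∈ cluster Cl i, ∑ v ∈ cluster Cl j, fuv G Cl Cl' u v else 0 := by
    simp only [← Finset.sum_sub_distrib]
    refine Finset.sum_congr rfl fun i _ => Finset.sum_congr rfl fun j _ => ?_
    split_ifs <;> simp [hD]
  have e3 : ∑ i, D i i = (∑ i, ((cluster Cl i).card : ℝ) / (q : ℝ) *
      ∑ u ∈ cluster Cl i, ∑ s : Fin q, fuv G Cl Cl' u (ω u i s).1) -
      ∑ i, ∑ u ∈ cluster Cl i, ∑ v ∈ cluster Cl i, fuv G Cl Cl' u v := by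
    simp only [hD, Finset.sum_sub_distrib]
  clear_value D
  clear hD
  have e4 : ∀ x y : ℝ, x = -y → |x| = |y| := fun x y h => by rw [h, abs_neg]
  rw [cost_sub_cost, e4 _ (∑ i, ∑ j, ((if i = j then 1 / 2 * D i j else 0) +
    (if i < j then D i j else 0)))]
  · refine (Finset.abs_sum_le_sum_abs _ _).trans (Finset.sum_le_sum fun i _ => ?_)
    refine (Finset.abs_sum_le_sum_abs _ _).trans (Finset.sum_le_sum fun j _ => ?_)
    rcases lt_trichotomy i j with h | rfl | h
    · simp [h, h.ne]
    · simp only [if_true, lt_irrefl, if_false, add_zero, abs_mul]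
      rw [abs_of_pos (by norm_num : (0 : ℝ) < 1 / 2)]
      linarith [abs_nonneg (D i i)]
    · simp [h.ne', h.not_gt]
  · simp only [Finset.sum_add_distrib, Finset.sum_ite_eq, Finset.mem_univ, if_true,
      ← Finset.mul_sum, e1, e2, e3]
    ring

end Samples

/-- the ε-SRRA guarantee, Lemma 3 of the paper.  There is a universal
constant `c₂ > 0` such that the following holds.  Let `ε ∈ (0,1)`, `|V| = n ≥ 2`, and let
`q` be an integer with `q ≥ c₂ k² (log n)/ε⁴`.  Fix a pivotal `k`-clustering `C`
(assignment `Cl`) with all clusters nonempty.  For each `u ∈ V` and `j ∈ [k]`, the sample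
`S_{uj}` consists of `q` points drawn independently and uniformly with replacement from
`C_j`; the family of samples is a uniform element `ω` of
`Ω = Π (u : V) (j : Fin k), Fin q → C_j`.  Then with probability at least `1 − 2n⁻³`,
simultaneously for all `k`-clusterings `C'`: `|f(C') − f̂(C')| ≤ 3ε·d(C,C')`, where
`f(C') = cost(C') − cost(C)` and
`f̂(C') = (1/2) Σ_i (|C_i|/q) Σ_{u∈C_i} Σ_s f_{u,S_{ui}(s)}(C')
        + Σ_i Σ_{u∈C_i} Σ_{j>i} (|C_j|/q) Σ_s f_{u,S_{uj}(s)}(C')`;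
i.e. `f̂` is a `3ε`-smooth relative regret approximation with respect to `C`. -/
theorem stmt17 :
    ∃ c₂ : ℝ, 0 < c₂ ∧
      ∀ (V : Type) [Fintype V] (k q : ℕ) (G : SimpleGraph V) (Cl : V → Fin k),
        (∀ j : Fin k, ∃ v : V, Cl v = j) →
        ∀ ε : ℝ, 0 < ε → ε < 1 → 2 ≤ Fintype.card V →
        c₂ * (k : ℝ) ^ 2 * Real.log (Fintype.card V) / ε ^ 4 ≤ (q : ℝ) →
        1 - 2 * (Fintype.card V : ℝ) ^ (-3 : ℤ) ≤
          ((Finset.univ.filter fun ω : ∀ _u : V, ∀ j : Fin k, Fin q → {v : V // Cl v = j} =>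
              ∀ Cl' : V → Fin k,
                |(cost G Cl' - cost G Cl)
                    - ((1 / 2) * ∑ i : Fin k, ((cluster Cl i).card : ℝ) / (q : ℝ) *
                          ∑ u ∈ cluster Cl i, ∑ s : Fin q, fuv G Cl Cl' u (ω u i s).1
                        + ∑ i : Fin k, ∑ u ∈ cluster Cl i, ∑ j : Fin k,
                            if i < j then
                              ((cluster Cl j).card : ℝ) / (q : ℝ) *
                                ∑ s : Fin q, fuv G Cl Cl' u (ω u j s).1
                            else 0)|
                  ≤ 3 * ε * dd Cl Cl').card : ℝ)
            / (Fintype.card (∀ _u : V, ∀ j : Fin k, Fin q → {v : V // Cl v = j}) : ℝ) := by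
  refine ⟨120000, by norm_num, ?_⟩
  intro V _ k q G Cl hCl ε hε0 hε1 hn hq
  have hn2 : (2 : ℝ) ≤ Fintype.card V := by exact_mod_cast hn
  have hlog : 0 < Real.log (Fintype.card V) := Real.log_pos (by linarith)
  obtain ⟨v₀⟩ : Nonempty V := Fintype.card_pos_iff.1 (by omega)
  have hk : (1 : ℝ) ≤ k := by exact_mod_cast (Nat.zero_le _).trans_lt (Cl v₀).2
  have hk0 : (0 : ℝ) < k := by linarith
  have hq0 : (0 : ℝ) < q := lt_of_lt_of_le (by positivity) hq
  set δ : ℝ := ε / (4 * k) with hδ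
  have hδ0 : 0 ≤ δ := by positivity
  have hδ1 : δ ≤ 1 := by
    rw [hδ, div_le_one (by positivity)]
    linarith
  set η : ℝ := 12 * Real.log (Fintype.card V) / q with hη
  have hη0 : 0 ≤ η := by positivity
  have hηδ : η ≤ (δ / 25) ^ 2 := by
    rw [div_le_iff₀ (by positivity)] at hq
    rw [hη, hδ, div_le_iff₀ hq0, div_div, div_pow, div_mul_eq_mul_div, le_div_iff₀ (by positivity)]
    have : (q : ℝ) * ε ^ 4 ≤ q * ε ^ 2 := by
      gcongr ?_ * ?_
      exact pow_le_pow_of_le_one hε0.le hε1.le (by norm_num)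
    linarith
  refine one_sub_le_card_div (Nat.cast_pos.1 hq0) hCl hn (abs_pairSign_le G Cl) _ fun ω h1 h2 h3 =>
    Finset.mem_filter.2 ⟨Finset.mem_univ _, fun Cl' => ?_⟩
  refine (abs_regret_sub_estimate_le G Cl' ω).trans ?_
  refine (sum_abs_blockError_le hδ0 (fun i j A hA B hB =>
    abs_sampleError_le hδ0 hδ1 hη0 hηδ (abs_pairSign_le G Cl) h1 h2 h3 hA hB) Cl').trans ?_
  have hd := dd_nonneg Cl Cl'
  rw [← mul_assoc]
  refine mul_le_mul_of_nonneg_right ?_ hd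
  rw [hδ, div_mul_eq_mul_div, div_le_iff₀ (by positivity)]
  nlinarith
end
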